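/- arXiv:1701.02661 — 2 statements merged into one kernel-verified Lean document; each statement's English description precedes it below -/
import Mathlib

section
/- Let X be a stable set of functions on Ω. Then the collection P(X) of all conditional subsets of X, ordered by conditional inclusion ⊑, is a complete, complemented, distributive lattice; consequently, equipped with the lattice supremum ⊔ (conditional union), infimum ⊓ (conditional intersection), complementation (·)^⊏ (conditional complement), least element {∗} = X|∅ and greatest element X, P(X) is a complete Boolean algebra. -/
/-!
Common framework for conditional set theory and conditional measure theory
in the sense of Drapeau–Jamneshan–Karliczek–Kupper, specialized to the
measure algebra associated to a probability space `(Ω, F, P)`.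

Functions on `Ω` are identified when they agree `P`-a.s., and measurable sets
are identified when their symmetric difference is a null set.  Conditional
subsets of a stable set `X` are represented by raw pairs `(V, A)` consisting of
a set of functions and a (measurable) base set; all notions are formulated with
respect to the almost-sure identifications via the relations `cle` and `ceq`.
-/

open MeasureTheory Filter Set Topology
open scoped ENNReal

noncomputable section

namespace CondMT

variable {Ω E F' : Type*}

/-- A countable partition of `Ω` into measurable sets (modulo `P`-null sets). -/
structure Partition {Ω : Type*} (mΩ : MeasurableSpace Ω) (P : @Measure Ω mΩ) where
  part : ℕ → Set Ω
  meas : ∀ k, MeasurableSet[mΩ] (part k)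
  disj : ∀ i j, i ≠ j → P (part i ∩ part j) = 0
  cover : P ((⋃ k, part k)ᶜ) = 0

variable {mΩ : MeasurableSpace Ω}

open Classical in
/-- The concatenation `∑ x_k|A_k` of a sequence of functions along a partition:
the (a.s. unique) function equal to `x_k` on `A_k` for every `k`. -/
def Partition.concat {P : @Measure Ω mΩ} (A : Partition mΩ P) (x : ℕ → Ω → E) : Ω → E :=
  fun ω => if h : ∃ k, ω ∈ A.part k then x (Nat.find h) ω else x 0 ω

/-- A stable set of functions on `Ω`: nonempty, closed under a.s. modification and
closed under countable concatenations along partitions. -/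
def Stable (P : @Measure Ω mΩ) (X : Set (Ω → E)) : Prop :=
  X.Nonempty ∧ (∀ x ∈ X, ∀ y, x =ᵐ[P] y → y ∈ X) ∧
    ∀ (A : Partition mΩ P) (x : ℕ → Ω → E), (∀ k, x k ∈ X) → A.concat x ∈ X

/-- Raw data of a conditional subset `V|A`: the carrier `V` and the base set `A`. -/
abbrev CondRaw (Ω E : Type*) := Set (Ω → E) × Set Ω

/-- `S` represents a conditional subset of the stable set `X`: the carrier is a
stable subset of `X` and the base is measurable. -/
def IsCond (P : @Measure Ω mΩ) (X : Set (Ω → E)) (S : CondRaw Ω E) : Prop :=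
  Stable P S.1 ∧ S.1 ⊆ X ∧ MeasurableSet[mΩ] S.2

/-- Conditional inclusion `V|A ⊑ W|B`: `A ⊆ B` a.s., and every `x|A`, `x ∈ V`,
coincides a.s. on `A` with some `y|A`, `y ∈ W`. -/
def cle (P : @Measure Ω mΩ) (S T : CondRaw Ω E) : Prop :=
  P (S.2 \ T.2) = 0 ∧ ∀ x ∈ S.1, ∃ y ∈ T.1, ∀ᵐ ω ∂P, ω ∈ S.2 → x ω = y ω

/-- Identification of conditional subsets (equality in the conditional power set). -/
def ceq (P : @Measure Ω mΩ) (S T : CondRaw Ω E) : Prop := cle P S T ∧ cle P T S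

/-- `x|C ∈ V|C`: the restriction of `x` to `C` agrees a.s. on `C` with an element of `V`. -/
def memOn (P : @Measure Ω mΩ) (C : Set Ω) (x : Ω → E) (V : Set (Ω → E)) : Prop :=
  ∃ y ∈ V, ∀ᵐ ω ∂P, ω ∈ C → x ω = y ω

/-- `∑ V_k|A_k`, the set of concatenations of sequences taken from the `V_k`. -/
def concatSet (P : @Measure Ω mΩ) (A : Partition mΩ P) (V : ℕ → Set (Ω → E)) :
    Set (Ω → E) :=
  {f | ∃ x : ℕ → Ω → E, (∀ k, x k ∈ V k) ∧ f =ᵐ[P] A.concat x}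

/-- Countable concatenation `∑ (V_k|B_k)|A_k := (∑ V_k|A_k)|⋃ (A_k ∩ B_k)` in the
conditional power set. -/
def condConcat (P : @Measure Ω mΩ) (A : Partition mΩ P) (S : ℕ → CondRaw Ω E) :
    CondRaw Ω E :=
  (concatSet P A fun k => (S k).1, ⋃ k, A.part k ∩ (S k).2)

/-- Restriction `(V|A)|B := V|(A ∩ B)`. -/
def crestrict (S : CondRaw Ω E) (B : Set Ω) : CondRaw Ω E := (S.1, S.2 ∩ B)

/-- The degenerate conditional subset `X|∅ = {∗}`, the least element of `P(X)`. -/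
def cbot (X : Set (Ω → E)) : CondRaw Ω E := (X, (∅ : Set Ω))

/-- The greatest element `X = X|Ω` of `P(X)`. -/
def ctop (X : Set (Ω → E)) : CondRaw Ω E := (X, (univ : Set Ω))

/-- `a` is a supremum (conditional union) of the family `s` in `(P(X), ⊑)`. -/
def IsSupOf (P : @Measure Ω mΩ) (X : Set (Ω → E)) (s : Set (CondRaw Ω E))
    (a : CondRaw Ω E) : Prop :=
  IsCond P X a ∧ (∀ b ∈ s, cle P b a) ∧
    ∀ c, IsCond P X c → (∀ b ∈ s, cle P b c) → cle P a c

/-- `a` is an infimum (conditional intersection) of the family `s` in `(P(X), ⊑)`. -/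
def IsInfOf (P : @Measure Ω mΩ) (X : Set (Ω → E)) (s : Set (CondRaw Ω E))
    (a : CondRaw Ω E) : Prop :=
  IsCond P X a ∧ (∀ b ∈ s, cle P a b) ∧
    ∀ c, IsCond P X c → (∀ b ∈ s, cle P c b) → cle P c a

open Classical in
/-- The conditional union (supremum) of a family of conditional subsets. -/
def cSup (P : @Measure Ω mΩ) (X : Set (Ω → E)) (s : Set (CondRaw Ω E)) : CondRaw Ω E :=
  if h : ∃ a, IsSupOf P X s a then h.choose else ctop X

open Classical in
/-- The conditional intersection (infimum) of a family of conditional subsets. -/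
def cInf (P : @Measure Ω mΩ) (X : Set (Ω → E)) (s : Set (CondRaw Ω E)) : CondRaw Ω E :=
  if h : ∃ a, IsInfOf P X s a then h.choose else ctop X

/-- Binary conditional union. -/
def cSup₂ (P : @Measure Ω mΩ) (X : Set (Ω → E)) (a b : CondRaw Ω E) : CondRaw Ω E :=
  cSup P X {a, b}

/-- Binary conditional intersection. -/
def cInf₂ (P : @Measure Ω mΩ) (X : Set (Ω → E)) (a b : CondRaw Ω E) : CondRaw Ω E :=
  cInf P X {a, b}

/-- Conditional union of an indexed family. -/
def cSupFam (P : @Measure Ω mΩ) (X : Set (Ω → E)) {ι : Sort*}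
    (S : ι → CondRaw Ω E) : CondRaw Ω E :=
  cSup P X (range S)

/-- Conditional intersection of an indexed family. -/
def cInfFam (P : @Measure Ω mΩ) (X : Set (Ω → E)) {ι : Sort*}
    (S : ι → CondRaw Ω E) : CondRaw Ω E :=
  cInf P X (range S)

/-- Disjointness of conditional subsets: `V|A ⊓ W|B = {∗}`. -/
def cdisjoint (P : @Measure Ω mΩ) (X : Set (Ω → E)) (a b : CondRaw Ω E) : Prop :=
  ceq P (cInf₂ P X a b) (cbot X)

/-- The conditional complement `(V|A)^⊏ := ⊔ {W|B : W|B ⊓ V|A = {∗}}`. -/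
def ccompl (P : @Measure Ω mΩ) (X : Set (Ω → E)) (a : CondRaw Ω E) : CondRaw Ω E :=
  cSup P X {b | IsCond P X b ∧ cdisjoint P X b a}

open Classical in
/-- The largest measurable set (mod null sets) satisfying a property `Φ`,
obtained by an exhaustion argument; junk value `∅` if there is none. -/
def largestSet (P : @Measure Ω mΩ) (Φ : Set Ω → Prop) : Set Ω :=
  if h : ∃ C, MeasurableSet[mΩ] C ∧ Φ C ∧
      ∀ C', MeasurableSet[mΩ] C' → Φ C' → P (C' \ C) = 0
  then h.choose else ∅

open Classical in
/-- The smallest measurable set (mod null sets) satisfying a property `Φ`. -/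
def smallestSet (P : @Measure Ω mΩ) (Φ : Set Ω → Prop) : Set Ω :=
  if h : ∃ C, MeasurableSet[mΩ] C ∧ Φ C ∧
      ∀ C', MeasurableSet[mΩ] C' → Φ C' → P (C \ C') = 0
  then h.choose else univ

/-- Essential infimum `inf_i A_i` of a family of measurable sets in the measure algebra. -/
def essInfFam (P : @Measure Ω mΩ) {ι : Sort*} (A : ι → Set Ω) : Set Ω :=
  largestSet P fun C => ∀ i, P (C \ A i) = 0

/-- Essential supremum `sup_i A_i` of a family of measurable sets in the measure algebra. -/
def essSupFam (P : @Measure Ω mΩ) {ι : Sort*} (A : ι → Set Ω) : Set Ω :=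
  smallestSet P fun C => ∀ i, P (A i \ C) = 0

/-- A stable collection: a nonempty, `ceq`-saturated family of conditional subsets of `X`
closed under countable concatenations. -/
def IsStableColl (P : @Measure Ω mΩ) (X : Set (Ω → E)) (𝒞 : Set (CondRaw Ω E)) : Prop :=
  𝒞.Nonempty ∧ (∀ S ∈ 𝒞, IsCond P X S) ∧
    (∀ S ∈ 𝒞, ∀ T, IsCond P X T → ceq P S T → T ∈ 𝒞) ∧
    ∀ (A : Partition mΩ P) (S : ℕ → CondRaw Ω E), (∀ k, S k ∈ 𝒞) → condConcat P A S ∈ 𝒞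

/-- A stable σ-algebra on `X`. -/
def IsStableSigma (P : @Measure Ω mΩ) (X : Set (Ω → E)) (𝒳 : Set (CondRaw Ω E)) : Prop :=
  IsStableColl P X 𝒳 ∧ ctop X ∈ 𝒳 ∧ (∀ S ∈ 𝒳, ccompl P X S ∈ 𝒳) ∧
    ∀ S : ℕ → CondRaw Ω E, (∀ k, S k ∈ 𝒳) → cSupFam P X S ∈ 𝒳

/-- A stable Dynkin system on `X`. -/
def IsStableDynkin (P : @Measure Ω mΩ) (X : Set (Ω → E)) (𝒟 : Set (CondRaw Ω E)) : Prop :=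
  IsStableColl P X 𝒟 ∧ ctop X ∈ 𝒟 ∧ (∀ S ∈ 𝒟, ccompl P X S ∈ 𝒟) ∧
    ∀ S : ℕ → CondRaw Ω E, (∀ k, S k ∈ 𝒟) →
      (∀ i j, i ≠ j → cdisjoint P X (S i) (S j)) → cSupFam P X S ∈ 𝒟

/-- A stable ring on `X`. -/
def IsStableRing (P : @Measure Ω mΩ) (X : Set (Ω → E)) (𝒳 : Set (CondRaw Ω E)) : Prop :=
  IsStableColl P X 𝒳 ∧
    ∀ S ∈ 𝒳, ∀ T ∈ 𝒳, cInf₂ P X S (ccompl P X T) ∈ 𝒳 ∧ cSup₂ P X S T ∈ 𝒳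

/-- The stable σ-algebra generated by a collection `ℰ`. -/
def sigmaGen (P : @Measure Ω mΩ) (X : Set (Ω → E)) (ℰ : Set (CondRaw Ω E)) :
    Set (CondRaw Ω E) :=
  ⋂₀ {𝒳 | IsStableSigma P X 𝒳 ∧ ℰ ⊆ 𝒳}

/-- The stable Dynkin system generated by a collection `ℰ`. -/
def dynkinGen (P : @Measure Ω mΩ) (X : Set (Ω → E)) (ℰ : Set (CondRaw Ω E)) :
    Set (CondRaw Ω E) :=
  ⋂₀ {𝒟 | IsStableDynkin P X 𝒟 ∧ ℰ ⊆ 𝒟}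

/-! ### Stable set functions and stable measures -/

/-- A stable set function `μ : 𝒞 → L̄⁰₊` (represented by measurable representatives,
well defined modulo identification, and commuting with countable concatenations). -/
def IsStableSetFun (P : @Measure Ω mΩ) (𝒞 : Set (CondRaw Ω E))
    (μ : CondRaw Ω E → Ω → ℝ≥0∞) : Prop :=
  (∀ S ∈ 𝒞, Measurable[mΩ] (μ S)) ∧
    (∀ S ∈ 𝒞, ∀ T ∈ 𝒞, ceq P S T → μ S =ᵐ[P] μ T) ∧
    ∀ (A : Partition mΩ P) (S : ℕ → CondRaw Ω E), (∀ k, S k ∈ 𝒞) →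
      μ (condConcat P A S) =ᵐ[P] A.concat fun k => μ (S k)

/-- Property (M1): `μ(V|A) = μ(V|A)|A + 0|Aᶜ`. -/
def M1 (P : @Measure Ω mΩ) (𝒞 : Set (CondRaw Ω E)) (μ : CondRaw Ω E → Ω → ℝ≥0∞) : Prop :=
  ∀ S ∈ 𝒞, μ S =ᵐ[P] S.2.indicator (μ S)

/-- Property (M2): countable additivity on pairwise disjoint sequences whose
conditional union belongs to the domain. -/
def M2 (P : @Measure Ω mΩ) (X : Set (Ω → E)) (𝒳 : Set (CondRaw Ω E))
    (μ : CondRaw Ω E → Ω → ℝ≥0∞) : Prop :=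
  ∀ S : ℕ → CondRaw Ω E, (∀ k, S k ∈ 𝒳) →
    (∀ i j, i ≠ j → cdisjoint P X (S i) (S j)) → cSupFam P X S ∈ 𝒳 →
    μ (cSupFam P X S) =ᵐ[P] fun ω => ∑' k, μ (S k) ω

/-- Finite additivity: (M2) for finite pairwise disjoint families. -/
def FinAdd (P : @Measure Ω mΩ) (X : Set (Ω → E)) (𝒳 : Set (CondRaw Ω E))
    (μ : CondRaw Ω E → Ω → ℝ≥0∞) : Prop :=
  ∀ (n : ℕ) (S : Fin n → CondRaw Ω E), (∀ k, S k ∈ 𝒳) →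
    (∀ i j, i ≠ j → cdisjoint P X (S i) (S j)) → cSupFam P X S ∈ 𝒳 →
    μ (cSupFam P X S) =ᵐ[P] fun ω => ∑ k, μ (S k) ω

/-- A stable measure (or stable pre-measure, when the domain is merely a stable
ring): a stable set function satisfying (M1) and (M2). -/
def IsStableMeasureOn (P : @Measure Ω mΩ) (X : Set (Ω → E)) (𝒳 : Set (CondRaw Ω E))
    (μ : CondRaw Ω E → Ω → ℝ≥0∞) : Prop :=
  IsStableSetFun P 𝒳 μ ∧ M1 P 𝒳 μ ∧ M2 P X 𝒳 μ

/-- A finite stable measure. -/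
def IsFiniteStableMeasureOn (P : @Measure Ω mΩ) (X : Set (Ω → E))
    (𝒳 : Set (CondRaw Ω E)) (μ : CondRaw Ω E → Ω → ℝ≥0∞) : Prop :=
  IsStableMeasureOn P X 𝒳 μ ∧ ∀ᵐ ω ∂P, μ (ctop X) ω < ∞

/-- A stable probability measure. -/
def IsStableProbOn (P : @Measure Ω mΩ) (X : Set (Ω → E)) (𝒳 : Set (CondRaw Ω E))
    (μ : CondRaw Ω E → Ω → ℝ≥0∞) : Prop :=
  IsStableMeasureOn P X 𝒳 μ ∧ μ (ctop X) =ᵐ[P] fun _ => (1 : ℝ≥0∞)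

/-- A stable outer measure on the conditional power set of `X`. -/
def IsStableOuter (P : @Measure Ω mΩ) (X : Set (Ω → E))
    (μ : CondRaw Ω E → Ω → ℝ≥0∞) : Prop :=
  (∀ S, IsCond P X S → Measurable[mΩ] (μ S)) ∧
    (∀ S T, IsCond P X S → IsCond P X T → ceq P S T → μ S =ᵐ[P] μ T) ∧
    (∀ (A : Partition mΩ P) (S : ℕ → CondRaw Ω E), (∀ k, IsCond P X (S k)) →
      μ (condConcat P A S) =ᵐ[P] A.concat fun k => μ (S k)) ∧
    (∀ S, IsCond P X S → ∀ B, MeasurableSet[mΩ] B →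
      μ (crestrict S B) =ᵐ[P] B.indicator (μ S)) ∧
    (∀ S T, IsCond P X S → IsCond P X T → cle P S T → ∀ᵐ ω ∂P, μ S ω ≤ μ T ω) ∧
    ∀ S : ℕ → CondRaw Ω E, (∀ k, IsCond P X (S k)) →
      ∀ᵐ ω ∂P, μ (cSupFam P X S) ω ≤ ∑' k, μ (S k) ω

/-- Stable Carathéodory measurability with respect to a stable outer measure. -/
def CaraMeasurable (P : @Measure Ω mΩ) (X : Set (Ω → E))
    (μ : CondRaw Ω E → Ω → ℝ≥0∞) (S : CondRaw Ω E) : Prop :=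
  ∀ T, IsCond P X T →
    (fun ω => μ (cInf₂ P X T S) ω + μ (cInf₂ P X T (ccompl P X S)) ω) =ᵐ[P] μ T

/-! ### Stable functions, the stable Borel σ-algebra on `L⁰`, and the integral -/

/-- The stable set `L⁰_m(E)` of all (classes of) measurable functions `Ω → E`. -/
def l0m (P : @Measure Ω mΩ) (E : Type*) [MeasurableSpace E] : Set (Ω → E) :=
  {x | AEMeasurable x P}

/-- A stable function between stable sets of functions. -/
def StableFun (P : @Measure Ω mΩ) (X : Set (Ω → E)) (Y : Set (Ω → F'))
    (f : (Ω → E) → Ω → F') : Prop :=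
  (∀ x ∈ X, f x ∈ Y) ∧ (∀ x ∈ X, ∀ y ∈ X, x =ᵐ[P] y → f x =ᵐ[P] f y) ∧
    ∀ (A : Partition mΩ P) (x : ℕ → Ω → E), (∀ k, x k ∈ X) →
      f (A.concat x) =ᵐ[P] A.concat fun k => f (x k)

/-- The conditional preimage `f⁻¹(W|A)`. -/
def cPreimage (P : @Measure Ω mΩ) (X : Set (Ω → E)) (f : (Ω → E) → Ω → F')
    (W : CondRaw Ω F') : CondRaw Ω E :=
  ({x ∈ X | memOn P (largestSet P fun C => P (C \ W.2) = 0 ∧ ∃ x ∈ X, memOn P C (f x) W.1)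
      (f x) W.1},
    largestSet P fun C => P (C \ W.2) = 0 ∧ ∃ x ∈ X, memOn P C (f x) W.1)

/-- The stable Borel σ-algebra `B(L⁰)` on `L⁰`, generated by the stable open balls. -/
def borelL0 (P : @Measure Ω mΩ) : Set (CondRaw Ω ℝ) :=
  sigmaGen P (l0m P ℝ)
    {S | ∃ r ε : Ω → ℝ, AEMeasurable r P ∧ AEMeasurable ε P ∧ (∀ᵐ ω ∂P, 0 < ε ω) ∧
      ceq P S ({s | AEMeasurable s P ∧ ∀ᵐ ω ∂P, |s ω - r ω| < ε ω}, univ)}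

/-- A stably measurable function `f : X → L⁰` with respect to a stable σ-algebra `𝒳`. -/
def StablyMeasurable (P : @Measure Ω mΩ) (X : Set (Ω → E)) (𝒳 : Set (CondRaw Ω E))
    (f : (Ω → E) → Ω → ℝ) : Prop :=
  StableFun P X (l0m P ℝ) f ∧ ∀ W ∈ borelL0 P, cPreimage P X f W ∈ 𝒳

/-- The base set `A_x` of the stable indicator function of `S = V|A` at `x`. -/
def indBase (P : @Measure Ω mΩ) (S : CondRaw Ω E) (x : Ω → E) : Set Ω :=
  largestSet P fun C => P (C \ S.2) = 0 ∧ memOn P C x S.1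

/-- The stable indicator function `1_{V|A} : X → L⁰`. -/
def cIndicator (P : @Measure Ω mΩ) (S : CondRaw Ω E) (x : Ω → E) : Ω → ℝ :=
  (indBase P S x).indicator fun _ => (1 : ℝ)

/-- Data of a stable elementary function: coefficients and conditional sets. -/
def ElemRep (Ω E : Type*) := Σ n : ℕ, (Fin n → Ω → ℝ) × (Fin n → CondRaw Ω E)

/-- The function `∑_{k ≤ n} r_k 1_{V_k|A_k}` represented by `ρ`. -/
def repFun (P : @Measure Ω mΩ) (ρ : ElemRep Ω E) : (Ω → E) → Ω → ℝ :=
  fun x ω => ∑ k, ρ.2.1 k ω * cIndicator P (ρ.2.2 k) x ω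

/-- The representation `ρ` is admissible: nonnegative `L⁰`-coefficients and a finite
pairwise disjoint family in `𝒳` whose conditional union is `X`. -/
def GoodRep (P : @Measure Ω mΩ) (X : Set (Ω → E)) (𝒳 : Set (CondRaw Ω E))
    (ρ : ElemRep Ω E) : Prop :=
  (∀ k, AEMeasurable (ρ.2.1 k) P) ∧ (∀ k, ∀ᵐ ω ∂P, 0 ≤ ρ.2.1 k ω) ∧
    (∀ k, ρ.2.2 k ∈ 𝒳) ∧ (∀ i j, i ≠ j → cdisjoint P X (ρ.2.2 i) (ρ.2.2 j)) ∧
    ceq P (cSupFam P X ρ.2.2) (ctop X)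

/-- A stable elementary function. -/
def IsElementary (P : @Measure Ω mΩ) (X : Set (Ω → E)) (𝒳 : Set (CondRaw Ω E))
    (f : (Ω → E) → Ω → ℝ) : Prop :=
  ∃ ρ : ElemRep Ω E, GoodRep P X 𝒳 ρ ∧ ∀ x ∈ X, f x =ᵐ[P] repFun P ρ x

/-- The stable Lebesgue integral `∑_k r_k μ(V_k|A_k)` of the elementary representation. -/
def repInt (μ : CondRaw Ω E → Ω → ℝ≥0∞) (ρ : ElemRep Ω E) : Ω → ℝ≥0∞ :=
  fun ω => ∑ k, ENNReal.ofReal (ρ.2.1 k ω) * μ (ρ.2.2 k) ω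

/-- The stable Lebesgue integral of a nonnegative function, as the supremum of the
integrals of the dominated stable elementary functions. -/
def cIntNN (P : @Measure Ω mΩ) (X : Set (Ω → E)) (𝒳 : Set (CondRaw Ω E))
    (μ : CondRaw Ω E → Ω → ℝ≥0∞) (f : (Ω → E) → Ω → ℝ) : Ω → ℝ≥0∞ :=
  fun ω =>
    ⨆ ρ : {ρ : ElemRep Ω E // GoodRep P X 𝒳 ρ ∧
        ∀ x ∈ X, ∀ᵐ ω' ∂P, repFun P ρ x ω' ≤ f x ω'},
      repInt μ ρ.1 ω

/-- The positive part `f⁺` of an `L⁰`-valued function. -/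
def fplus (f : (Ω → E) → Ω → ℝ) : (Ω → E) → Ω → ℝ := fun x ω => max (f x ω) 0

/-- The negative part `f⁻` of an `L⁰`-valued function. -/
def fminus (f : (Ω → E) → Ω → ℝ) : (Ω → E) → Ω → ℝ := fun x ω => max (-(f x ω)) 0

/-- Stable integrability of `f : X → L⁰`. -/
def CIntegrable (P : @Measure Ω mΩ) (X : Set (Ω → E)) (𝒳 : Set (CondRaw Ω E))
    (μ : CondRaw Ω E → Ω → ℝ≥0∞) (f : (Ω → E) → Ω → ℝ) : Prop :=
  StablyMeasurable P X 𝒳 f ∧ (∀ᵐ ω ∂P, cIntNN P X 𝒳 μ (fplus f) ω < ∞) ∧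
    ∀ᵐ ω ∂P, cIntNN P X 𝒳 μ (fminus f) ω < ∞

/-- The stable Lebesgue integral `∫_X f dμ := ∫ f⁺ dμ − ∫ f⁻ dμ`. -/
def cInt (P : @Measure Ω mΩ) (X : Set (Ω → E)) (𝒳 : Set (CondRaw Ω E))
    (μ : CondRaw Ω E → Ω → ℝ≥0∞) (f : (Ω → E) → Ω → ℝ) : Ω → ℝ :=
  fun ω => (cIntNN P X 𝒳 μ (fplus f) ω).toReal - (cIntNN P X 𝒳 μ (fminus f) ω).toReal

/-! ### Products and sections -/

/-- The pairing `ω ↦ (x ω, y ω)`. -/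
def pairFn (x : Ω → E) (y : Ω → F') : Ω → E × F' := fun ω => (x ω, y ω)

/-- The Cartesian product `X × Y` of two stable sets, as a stable set of functions
`Ω → E × F'`. -/
def prodSet (P : @Measure Ω mΩ) (X : Set (Ω → E)) (Y : Set (Ω → F')) :
    Set (Ω → E × F') :=
  {z | ∃ x ∈ X, ∃ y ∈ Y, z =ᵐ[P] pairFn x y}

/-- The conditional rectangle `V|A × W|B := (V × W)|A ∩ B`. -/
def crect (P : @Measure Ω mΩ) (S : CondRaw Ω E) (T : CondRaw Ω F') :
    CondRaw Ω (E × F') :=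
  (prodSet P S.1 T.1, S.2 ∩ T.2)

/-- The stable product σ-algebra `𝒳 ⊗ 𝒴`, generated by the conditional rectangles. -/
def prodSigma (P : @Measure Ω mΩ) (X : Set (Ω → E)) (Y : Set (Ω → F'))
    (𝒳 : Set (CondRaw Ω E)) (𝒴 : Set (CondRaw Ω F')) : Set (CondRaw Ω (E × F')) :=
  sigmaGen P (prodSet P X Y) {R | ∃ S ∈ 𝒳, ∃ T ∈ 𝒴, ceq P R (crect P S T)}

/-- The conditional `x`-section `(Z|C)_x` of a conditional subset of `X × Y`. -/
def xsection (P : @Measure Ω mΩ) (Y : Set (Ω → F')) (Z : CondRaw Ω (E × F'))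
    (x : Ω → E) : CondRaw Ω F' :=
  ({y ∈ Y | memOn P (largestSet P fun D => P (D \ Z.2) = 0 ∧ ∃ y ∈ Y, memOn P D (pairFn x y) Z.1)
      (pairFn x y) Z.1},
    largestSet P fun D => P (D \ Z.2) = 0 ∧ ∃ y ∈ Y, memOn P D (pairFn x y) Z.1)

/-- The conditional `y`-section `(Z|C)_y` of a conditional subset of `X × Y`. -/
def ysection (P : @Measure Ω mΩ) (X : Set (Ω → E)) (Z : CondRaw Ω (E × F'))
    (y : Ω → F') : CondRaw Ω E :=
  ({x ∈ X | memOn P (largestSet P fun D => P (D \ Z.2) = 0 ∧ ∃ x ∈ X, memOn P D (pairFn x y) Z.1)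
      (pairFn x y) Z.1},
    largestSet P fun D => P (D \ Z.2) = 0 ∧ ∃ x ∈ X, memOn P D (pairFn x y) Z.1)

/-! ### Conditional subsets of `L⁰_m(E)` associated to measurable sets -/

/-- `L⁰_m(F) = {x ∈ L⁰_m(E) : x ∈ F a.s.}` for a measurable `F ⊆ E`. -/
def l0mF (P : @Measure Ω mΩ) {E : Type*} [MeasurableSpace E] (F : Set E) : Set (Ω → E) :=
  {x | AEMeasurable x P ∧ ∀ᵐ ω ∂P, x ω ∈ F}

/-- `∑ L⁰_m(F_k)|A_k = {x ∈ L⁰_m(E) : x ∈ F_k a.s. on A_k for all k}`. -/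
def l0mConcat (P : @Measure Ω mΩ) {E : Type*} [MeasurableSpace E]
    (A : Partition mΩ P) (F : ℕ → Set E) : Set (Ω → E) :=
  {x | AEMeasurable x P ∧ ∀ k, ∀ᵐ ω ∂P, ω ∈ A.part k → x ω ∈ F k}

/-- The stable ring `ℛ` on `L⁰_m(E)` generated by a measurable structure on `E`:
all conditional subsets of the form `(∑ L⁰_m(F_k)|A_k)|B`. -/
def ringR (P : @Measure Ω mΩ) (E : Type*) [MeasurableSpace E] : Set (CondRaw Ω E) :=
  {S | ∃ (F : ℕ → Set E) (A : Partition mΩ P) (B : Set Ω),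
    (∀ k, MeasurableSet (F k)) ∧ MeasurableSet[mΩ] B ∧
      ceq P S (l0mConcat P A F, B)}

end CondMT

namespace CondMT

/-- A conditional subset of the stable set `X` (a representative together with the
proof that it is one). -/
def CondSub {Ω E : Type*} {mΩ : MeasurableSpace Ω} (P : @Measure Ω mΩ)
    (X : Set (Ω → E)) :=
  {S : CondRaw Ω E // IsCond P X S}

/-- The conditional power set `P(X)`: conditional subsets of `X` modulo the
almost-sure identification `ceq`. -/
def CondPow {Ω E : Type*} {mΩ : MeasurableSpace Ω} (P : @Measure Ω mΩ)
    (X : Set (Ω → E)) :=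
  Quot (fun S T : CondSub P X => ceq P S.1 T.1)

/-- The conditional inclusion relation `⊑` on the conditional power set. -/
def qle {Ω E : Type*} {mΩ : MeasurableSpace Ω} (P : @Measure Ω mΩ)
    (X : Set (Ω → E)) (a b : CondPow P X) : Prop :=
  ∀ S T : CondSub P X, Quot.mk _ S = a → Quot.mk _ T = b → cle P S.1 T.1

/-!
A conditional subset `V|A` is determined by the truth values `C ↦ (C ⊆ A a.s. and x|C ∈ V|C)`,
`x ∈ X`. For fixed `x` they form a σ-ideal of the measure algebra, and they depend on `x` only
through `x|C`. Conversely every such local predicate comes from a conditional subset: by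
concatenation and exhaustion there is a largest `A` on which some element of `X` satisfies it, and
`V` consists of the `x ∈ X` satisfying it on `A`. The Boolean operations on local predicates are
computed for each `x` separately, so the question becomes one about σ-ideals, where exhaustion
makes every ideal principal and hence complemented.
-/

section

variable {Ω E : Type*} {mΩ : MeasurableSpace Ω} {P : Measure Ω} {X V : Set (Ω → E)}
  {x y z : Ω → E} {A C D : Set Ω}

/-- The identity `x|C = y|C` of restrictions: `x` and `y` agree a.s. on `C`. -/
def AEEqOn (P : Measure Ω) (C : Set Ω) (x y : Ω → E) : Prop :=
  ∀ᵐ ω ∂P, ω ∈ C → x ω = y ω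

namespace AEEqOn

theorem of_eqOn (h : EqOn x y C) : AEEqOn P C x y :=
  ae_of_all P h

theorem symm (h : AEEqOn P C x y) : AEEqOn P C y x :=
  h.mono fun _ hω hC => (hω hC).symm

theorem trans (hxy : AEEqOn P C x y) (hyz : AEEqOn P C y z) : AEEqOn P C x z := by
  filter_upwards [hxy, hyz] with ω hω hω' hC using (hω hC).trans (hω' hC)

theorem mono (h : AEEqOn P C x y) (hDC : D ≤ᵐ[P] C) : AEEqOn P D x y := by
  filter_upwards [h, hDC] with ω hω hω' hD using hω (hω' hD)

end AEEqOn

theorem exists_ae_greatest [SFinite P] {𝒞 : Set (Set Ω)} (hmeas : ∀ C ∈ 𝒞, MeasurableSet C)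
    (hempty : ∅ ∈ 𝒞) (hUnion : ∀ C : ℕ → Set Ω, (∀ k, C k ∈ 𝒞) → ⋃ k, C k ∈ 𝒞) :
    ∃ A ∈ 𝒞, ∀ C ∈ 𝒞, C ≤ᵐ[P] A := by
  obtain ⟨S, hS, hScount, hSmax⟩ := Measure.exists_ae_subset_biUnion_countable P hmeas
  obtain ⟨D, hD⟩ := (hScount.insert ∅).exists_eq_range (insert_nonempty _ _)
  refine ⟨⋃ k, D k, hUnion D fun k => ?_, ?_⟩
  · exact insert_subset hempty hS (hD ▸ mem_range_self k)
  · rwa [← sUnion_range, ← hD, sUnion_insert, empty_union]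

/-- The least `k` with `ω ∈ C k`; it is `0` off `⋃ k, C k`, since `sInf ∅ = 0` in `ℕ`. -/
def firstIndex (C : ℕ → Set Ω) (ω : Ω) : ℕ :=
  sInf {k | ω ∈ C k}

theorem mem_firstIndex {C : ℕ → Set Ω} {ω : Ω} (h : ω ∈ ⋃ k, C k) : ω ∈ C (firstIndex C ω) :=
  Nat.sInf_mem (s := {k | ω ∈ C k}) (mem_iUnion.1 h)

theorem measurable_firstIndex {C : ℕ → Set Ω} (hC : ∀ k, MeasurableSet (C k)) :
    Measurable (firstIndex C) := by
  have preimage_Ioi (k : ℕ) : firstIndex C ⁻¹' Ioi k = (⋃ j, C j) \ ⋃ j ≤ k, C j := by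
    ext ω
    simp only [mem_preimage, mem_Ioi, Set.mem_sdiff, mem_iUnion, not_exists]
    refine ⟨fun h => ⟨Nat.nonempty_of_pos_sInf (k.zero_le.trans_lt h),
      fun j hj => Nat.notMem_of_lt_sInf (hj.trans_lt h)⟩, fun ⟨hω, h⟩ => ?_⟩
    by_contra! hle
    exact h _ hle (mem_firstIndex (mem_iUnion.2 hω))
  refine measurable_of_Ioi fun k => ?_
  rw [preimage_Ioi]
  measurability

theorem Partition.concat_eq_firstIndex (A : Partition mΩ P) (x : ℕ → Ω → E) :
    A.concat x = fun ω => x (firstIndex A.part ω) ω := by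
  ext ω
  unfold Partition.concat firstIndex
  split_ifs with h
  · rw [Nat.sInf_def (s := {k | ω ∈ A.part k}) h]
  · have hempty : {k | ω ∈ A.part k} = ∅ := eq_empty_iff_forall_notMem.2 (not_exists.1 h)
    rw [hempty, Nat.sInf_empty]

/-- The partition of `Ω` into the level sets of a measurable index. -/
def Partition.ofIndex (P : Measure Ω) {N : Ω → ℕ} (hN : Measurable N) : Partition mΩ P where
  part k := N ⁻¹' {k}
  meas k := hN (measurableSet_singleton k)
  disj i j hij := by
    rw [((disjoint_singleton.2 hij).preimage N).inter_eq, measure_empty]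
  cover := by rw [← preimage_iUnion, iUnion_of_singleton, preimage_univ, compl_univ, measure_empty]

theorem Partition.firstIndex_ofIndex {N : Ω → ℕ} (hN : Measurable N) :
    firstIndex (Partition.ofIndex P hN).part = N := by
  ext ω
  simp [firstIndex, Partition.ofIndex]

theorem stable_iff_select_mem : Stable P V ↔ V.Nonempty ∧ (∀ x ∈ V, ∀ y, x =ᵐ[P] y → y ∈ V) ∧
    ∀ (N : Ω → ℕ) (x : ℕ → Ω → E), Measurable N → (∀ k, x k ∈ V) → (fun ω => x (N ω) ω) ∈ V := by
  refine and_congr_right fun _ => and_congr_right fun _ =>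
    ⟨fun h N x hN hx => ?_, fun h A x hx => ?_⟩
  · simpa only [Partition.concat_eq_firstIndex, Partition.firstIndex_ofIndex]
      using h (.ofIndex P hN) x hx
  · rw [Partition.concat_eq_firstIndex]
    exact h _ x (measurable_firstIndex A.meas) hx

namespace Stable

theorem select_mem (hV : Stable P V) {N : Ω → ℕ} (hN : Measurable N) {x : ℕ → Ω → E}
    (hx : ∀ k, x k ∈ V) : (fun ω => x (N ω) ω) ∈ V :=
  (stable_iff_select_mem.1 hV).2.2 N x hN hx

theorem piecewise_mem [DecidablePred (· ∈ C)] (hV : Stable P V) (hC : MeasurableSet C)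
    (hx : x ∈ V) (hy : y ∈ V) : C.piecewise x y ∈ V := by
  have h := hV.select_mem (N := C.piecewise 0 1)
    (measurable_zero.piecewise hC measurable_one) (x := fun k => if k = 0 then x else y)
    fun k => by split_ifs <;> assumption
  convert h using 2 with ω
  by_cases hω : ω ∈ C <;> simp [hω]

end Stable

/-- A property of the restrictions `x|C` of the elements `x` of `X` to measurable sets `C`, which
passes to smaller sets and to countable unions. Conditional subsets correspond to such predicates
by `HoldsOn x C ↔ C ⊆ A a.s. and x|C ∈ V|C`, see `CondSub.membership`. -/
@[ext]
structure LocalPred (P : Measure Ω) (X : Set (Ω → E)) where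
  HoldsOn : X → Set Ω → Prop
  measurableSet {x : X} {C : Set Ω} : HoldsOn x C → MeasurableSet C
  empty (x : X) : HoldsOn x ∅
  mono {x : X} {C D : Set Ω} : HoldsOn x C → MeasurableSet D → D ≤ᵐ[P] C → HoldsOn x D
  iUnion {x : X} {C : ℕ → Set Ω} : (∀ k, HoldsOn x (C k)) → HoldsOn x (⋃ k, C k)
  congr {x y : X} {C : Set Ω} : HoldsOn x C → AEEqOn P C x.1 y.1 → HoldsOn y C

namespace LocalPred

variable {φ ψ : LocalPred P X} {x y : X}

theorem HoldsOn.inter (hC : φ.HoldsOn x C) (hD : MeasurableSet D) : φ.HoldsOn x (C ∩ D) :=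
  φ.mono hC ((φ.measurableSet hC).inter hD) inter_subset_left.eventuallyLE

theorem HoldsOn.union (hC : φ.HoldsOn x C) (hD : φ.HoldsOn x D) : φ.HoldsOn x (C ∪ D) := by
  have h := φ.iUnion (C := fun k => Nat.casesOn k C fun _ => D) (Nat.rec hC fun _ _ => hD)
  rwa [← union_iUnion_nat_succ, iUnion_const] at h

theorem holdsOn_select {N : Ω → ℕ} {x : ℕ → X} (hy : ∀ ω, y.1 ω = (x (N ω)).1 ω)
    (h : ∀ k, φ.HoldsOn (x k) (C ∩ N ⁻¹' {k})) : φ.HoldsOn y C := by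
  have hC : C = ⋃ k, C ∩ N ⁻¹' {k} := by
    rw [← inter_iUnion, ← preimage_iUnion, iUnion_of_singleton, preimage_univ, inter_univ]
  rw [hC]
  refine φ.iUnion fun k => φ.congr (h k) (.of_eqOn ?_)
  rintro ω ⟨-, rfl⟩
  exact (hy ω).symm

theorem exists_greatest [SFinite P] (φ : LocalPred P X) (x : X) :
    ∃ A, φ.HoldsOn x A ∧ ∀ C, φ.HoldsOn x C → C ≤ᵐ[P] A :=
  exists_ae_greatest (𝒞 := {C | φ.HoldsOn x C}) (fun _ => φ.measurableSet) (φ.empty x)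
    fun _ => φ.iUnion

theorem exists_holdsOn_iUnion (hX : Stable P X) (φ : LocalPred P X) {C : ℕ → Set Ω}
    (h : ∀ k, ∃ x, φ.HoldsOn x (C k)) : ∃ x, φ.HoldsOn x (⋃ k, C k) := by
  choose x hx using h
  have hN := measurable_firstIndex fun k => φ.measurableSet (hx k)
  refine ⟨⟨_, hX.select_mem hN fun k => (x k).2⟩, holdsOn_select (fun _ => rfl) fun k => ?_⟩
  have hsub : (⋃ j, C j) ∩ firstIndex C ⁻¹' {k} ⊆ C k := by
    rintro ω ⟨hω, rfl⟩
    exact mem_firstIndex hω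
  exact φ.mono (hx k) ((MeasurableSet.iUnion fun j => φ.measurableSet (hx j)).inter
    (hN (measurableSet_singleton k))) hsub.eventuallyLE

theorem exists_greatest_base [SFinite P] (hX : Stable P X) (φ : LocalPred P X) :
    ∃ z A, φ.HoldsOn z A ∧ ∀ x C, φ.HoldsOn x C → C ≤ᵐ[P] A := by
  obtain ⟨A, ⟨z, hzA⟩, hAmax⟩ := exists_ae_greatest (P := P) (𝒞 := {C | ∃ x, φ.HoldsOn x C})
    (fun _ ⟨_, hC⟩ => φ.measurableSet hC) (hX.1.elim fun x hx => ⟨⟨x, hx⟩, φ.empty _⟩)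
    fun _ => φ.exists_holdsOn_iUnion hX
  exact ⟨z, A, hzA, fun x C hxC => hAmax C ⟨x, hxC⟩⟩

theorem HoldsOn.exists_extension (hX : Stable P X) {z : X} (hx : φ.HoldsOn x C)
    (hz : φ.HoldsOn z A) : ∃ y : X, φ.HoldsOn y A ∧ AEEqOn P C x.1 y.1 := by
  classical
  have hC := φ.measurableSet hx
  let y : X := ⟨C.piecewise x z, hX.piecewise_mem hC x.2 z.2⟩
  have hxy : EqOn x.1 y.1 C := (piecewise_eqOn C x.1 z.1).symm
  have hzy : EqOn z.1 y.1 Cᶜ := (piecewise_eqOn_compl C x.1 z.1).symm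
  refine ⟨y, ?_, .of_eqOn hxy⟩
  rw [← inter_union_compl A C, inter_comm A C]
  exact (φ.congr (hx.inter (φ.measurableSet hz)) (.of_eqOn (hxy.mono inter_subset_left))).union
    (φ.congr (hz.inter hC.compl) (.of_eqOn (hzy.mono inter_subset_right)))

theorem stable_setOf_holdsOn (hX : Stable P X) (hA : ∃ z, φ.HoldsOn z A) :
    Stable P {x | ∃ hx : x ∈ X, φ.HoldsOn ⟨x, hx⟩ A} := by
  refine stable_iff_select_mem.2 ⟨hA.elim fun z hz => ⟨z, z.2, hz⟩, ?_, ?_⟩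
  · rintro x ⟨hx, hxA⟩ y hxy
    exact ⟨hX.2.1 x hx y hxy, φ.congr hxA (hxy.mono fun _ hω _ => hω)⟩
  · intro N x hN hx
    choose hx hxA using hx
    exact ⟨hX.select_mem hN hx, holdsOn_select (x := fun k => ⟨x k, hx k⟩) (fun _ => rfl)
      fun k => (hxA k).inter (hN (measurableSet_singleton k))⟩

instance : PartialOrder (LocalPred P X) :=
  PartialOrder.lift HoldsOn fun _ _ => LocalPred.ext

instance : Top (LocalPred P X) where
  top :=
    { HoldsOn := fun _ C => MeasurableSet C
      measurableSet := id
      empty := fun _ => .empty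
      mono := fun _ hD _ => hD
      iUnion := fun hC => .iUnion hC
      congr := fun hC _ => hC }

instance : Bot (LocalPred P X) where
  bot :=
    { HoldsOn := fun _ C => MeasurableSet C ∧ P C = 0
      measurableSet := And.left
      empty := fun _ => ⟨.empty, measure_empty⟩
      mono := fun hC hD hDC => ⟨hD, measure_mono_null_ae hDC hC.2⟩
      iUnion := fun hC => ⟨.iUnion fun k => (hC k).1, measure_iUnion_null fun k => (hC k).2⟩
      congr := fun hC _ => hC }

instance : InfSet (LocalPred P X) where
  sInf Φ :=
    { HoldsOn := fun x C => MeasurableSet C ∧ ∀ φ ∈ Φ, φ.HoldsOn x C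
      measurableSet := And.left
      empty := fun x => ⟨.empty, fun φ _ => φ.empty x⟩
      mono := fun hC hD hDC => ⟨hD, fun φ hφ => φ.mono (hC.2 φ hφ) hD hDC⟩
      iUnion := fun hC => ⟨.iUnion fun k => (hC k).1, fun φ hφ => φ.iUnion fun k => (hC k).2 φ hφ⟩
      congr := fun hC hxy => ⟨hC.1, fun φ hφ => φ.congr (hC.2 φ hφ) hxy⟩ }

instance : Min (LocalPred P X) where
  min φ ψ :=
    { HoldsOn := fun x C => φ.HoldsOn x C ∧ ψ.HoldsOn x C
      measurableSet := fun hC => φ.measurableSet hC.1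
      empty := fun x => ⟨φ.empty x, ψ.empty x⟩
      mono := fun hC hD hDC => ⟨φ.mono hC.1 hD hDC, ψ.mono hC.2 hD hDC⟩
      iUnion := fun hC => ⟨φ.iUnion fun k => (hC k).1, ψ.iUnion fun k => (hC k).2⟩
      congr := fun hC hxy => ⟨φ.congr hC.1 hxy, ψ.congr hC.2 hxy⟩ }

instance : Max (LocalPred P X) where
  max φ ψ :=
    { HoldsOn := fun x C => MeasurableSet C ∧
        ∃ A B, φ.HoldsOn x A ∧ ψ.HoldsOn x B ∧ C ≤ᵐ[P] (A ∪ B : Set Ω)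
      measurableSet := And.left
      empty := fun x => ⟨.empty, ∅, ∅, φ.empty x, ψ.empty x, (empty_subset _).eventuallyLE⟩
      mono := fun ⟨_, A, B, hA, hB, hC⟩ hD hDC => ⟨hD, A, B, hA, hB, hDC.trans hC⟩
      iUnion := fun hC => by
        choose hC A B hA hB hCAB using hC
        refine ⟨.iUnion hC, ⋃ k, A k, ⋃ k, B k, φ.iUnion hA, ψ.iUnion hB, ?_⟩
        rw [← iUnion_union_distrib]
        exact Filter.EventuallyLE.countable_iUnion hCAB
      congr := fun {x y C} ⟨hC, A, B, hA, hB, hCAB⟩ hxy => by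
        refine ⟨hC, A ∩ C, B ∩ C, φ.congr (hA.inter hC) (hxy.mono inter_subset_right.eventuallyLE),
          ψ.congr (hB.inter hC) (hxy.mono inter_subset_right.eventuallyLE), ?_⟩
        filter_upwards [hCAB] with ω hω hωC using (hω hωC).imp (⟨·, hωC⟩) (⟨·, hωC⟩) }

instance : Compl (LocalPred P X) where
  compl φ :=
    { HoldsOn := fun x C => MeasurableSet C ∧ ∀ D, φ.HoldsOn x D → AEDisjoint P C D
      measurableSet := And.left
      empty := fun x => ⟨.empty, fun D _ => by simp [AEDisjoint]⟩
      mono := fun hC hD hDC => ⟨hD, fun B hB => (hC.2 B hB).mono_ae hDC .rfl⟩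
      iUnion := fun hC => ⟨.iUnion fun k => (hC k).1, fun D hD =>
        AEDisjoint.iUnion_left_iff.2 fun k => (hC k).2 D hD⟩
      congr := fun {x y C} ⟨hC, hdisj⟩ hxy => ⟨hC, fun D hD => by
        have h := hdisj (D ∩ C) (φ.congr (hD.inter hC)
          (hxy.symm.mono inter_subset_right.eventuallyLE))
        rwa [AEDisjoint, inter_comm D, ← inter_assoc, inter_self] at h⟩ }

protected theorem isGLB_sInf (Φ : Set (LocalPred P X)) : IsGLB Φ (sInf Φ) :=
  ⟨fun φ hφ _ _ hC => hC.2 φ hφ, fun _ hψ x C hC => ⟨measurableSet _ hC, fun _ hφ => hψ hφ x C hC⟩⟩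

instance : CompleteLattice (LocalPred P X) :=
  { completeLatticeOfInf (LocalPred P X) LocalPred.isGLB_sInf with
    top := ⊤
    le_top := fun φ _ _ => φ.measurableSet
    bot := ⊥
    bot_le := fun φ x _ hC => φ.mono (φ.empty x) hC.1 (ae_eq_empty.2 hC.2).le
    inf := (· ⊓ ·)
    inf_le_left := fun _ _ _ _ => And.left
    inf_le_right := fun _ _ _ _ => And.right
    le_inf := fun _ _ _ hφ hψ x C hC => ⟨hφ x C hC, hψ x C hC⟩
    sup := (· ⊔ ·)
    le_sup_left := fun φ ψ x C hC =>
      ⟨φ.measurableSet hC, C, ∅, hC, ψ.empty x, subset_union_left.eventuallyLE⟩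
    le_sup_right := fun φ ψ x C hC =>
      ⟨ψ.measurableSet hC, ∅, C, φ.empty x, hC, subset_union_right.eventuallyLE⟩
    sup_le := fun _ _ χ hφ hψ x _ ⟨hC, A, B, hA, hB, hCAB⟩ =>
      χ.mono ((hφ x A hA).union (hψ x B hB)) hC hCAB }

protected theorem le_sup_inf (φ ψ χ : LocalPred P X) :
    (φ ⊔ ψ) ⊓ (φ ⊔ χ) ≤ φ ⊔ ψ ⊓ χ := by
  rintro x C ⟨⟨hC, A₁, B₁, hA₁, hB₁, h₁⟩, ⟨-, A₂, B₂, hA₂, hB₂, h₂⟩⟩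
  refine ⟨hC, A₁ ∪ A₂, B₁ ∩ B₂, hA₁.union hA₂,
    ⟨hB₁.inter (χ.measurableSet hB₂), ?_⟩, ?_⟩
  · rw [inter_comm]
    exact hB₂.inter (ψ.measurableSet hB₁)
  · filter_upwards [h₁, h₂] with ω hω₁ hω₂ hω
    obtain hA₁ | hB₁ := hω₁ hω
    · exact .inl (.inl hA₁)
    · exact (hω₂ hω).imp .inr (⟨hB₁, ·⟩)

theorem top_le_sup_compl [SFinite P] (φ : LocalPred P X) : ⊤ ≤ φ ⊔ φᶜ := by
  intro x C hC
  obtain ⟨A, hA, hAmax⟩ := φ.exists_greatest x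
  refine ⟨hC, A, C \ A, hA, ⟨hC.diff (φ.measurableSet hA), fun D hD => ?_⟩, ?_⟩
  · exact disjoint_sdiff_left.aedisjoint.mono_ae .rfl (hAmax D hD)
  · rw [union_sdiff_self]
    exact subset_union_right.eventuallyLE

instance [SFinite P] : CompleteBooleanAlgebra (LocalPred P X) :=
  { (inferInstance : CompleteLattice (LocalPred P X)) with
    le_sup_inf := LocalPred.le_sup_inf
    compl := (·ᶜ)
    inf_compl_le_bot := fun φ _ C hC =>
      ⟨φ.measurableSet hC.1, by simpa [AEDisjoint] using hC.2.2 C hC.1⟩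
    top_le_sup_compl := top_le_sup_compl }

end LocalPred

namespace CondSub

/-- The local predicate of a conditional subset `V|A`, namely that `C ⊆ A` a.s. and `x|C ∈ V|C`;
it determines `V|A` up to a.s. identification. -/
def membership (S : CondSub P X) : LocalPred P X where
  HoldsOn x C := MeasurableSet C ∧ C ≤ᵐ[P] S.1.2 ∧ memOn P C x S.1.1
  measurableSet := And.left
  empty x :=
    have ⟨y, hy⟩ := S.2.1.1
    ⟨.empty, (empty_subset _).eventuallyLE, y, hy, ae_of_all P fun _ => False.elim⟩
  mono hC hD hDC :=
    have ⟨_, hCS, y, hy, hxy⟩ := hC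
    ⟨hD, hDC.trans hCS, y, hy, AEEqOn.mono hxy hDC⟩
  iUnion {x C} h := by
    choose hC hCS y hy hxy using h
    refine ⟨.iUnion hC, ?_, _, S.2.1.select_mem (measurable_firstIndex hC) hy, ?_⟩
    · exact (Filter.EventuallyLE.countable_iUnion hCS).trans (iUnion_const S.1.2).le.eventuallyLE
    · filter_upwards [ae_all_iff.2 hxy] with ω hω hωC using hω _ (mem_firstIndex hωC)
  congr hC hxy :=
    have ⟨hC, hCS, y, hy, hxz⟩ := hC
    ⟨hC, hCS, y, hy, hxy.symm.trans hxz⟩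

theorem membership_le_iff {S T : CondSub P X} :
    S.membership ≤ T.membership ↔ cle P S.1 T.1 := by
  refine ⟨fun h => ?_, fun ⟨hST, hVW⟩ x C ⟨hC, hCS, y, hy, hxy⟩ => ?_⟩
  · have restrict_base (x) (hx : x ∈ S.1.1) : T.membership.HoldsOn ⟨x, S.2.2.1 hx⟩ S.1.2 :=
      h _ _ ⟨S.2.2.2, .rfl, x, hx, AEEqOn.of_eqOn (eqOn_refl x _)⟩
    obtain ⟨x, hx⟩ := S.2.1.1
    exact ⟨ae_le_set.1 (restrict_base x hx).2.1, fun x hx => (restrict_base x hx).2.2⟩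
  · obtain ⟨z, hz, hyz⟩ := hVW y hy
    exact ⟨hC, hCS.trans (ae_le_set.2 hST), z, hz, AEEqOn.trans hxy (AEEqOn.mono hyz hCS)⟩

theorem exists_membership_eq [SFinite P] (hX : Stable P X) (φ : LocalPred P X) :
    ∃ S : CondSub P X, S.membership = φ := by
  obtain ⟨z, A, hzA, hAmax⟩ := φ.exists_greatest_base hX
  refine ⟨⟨({x | ∃ hx : x ∈ X, φ.HoldsOn ⟨x, hx⟩ A}, A),
    LocalPred.stable_setOf_holdsOn hX ⟨z, hzA⟩, fun _ hx => hx.1, φ.measurableSet hzA⟩, ?_⟩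
  ext x C
  constructor
  · rintro ⟨hC, hCA, y, ⟨_, hyA⟩, hxy⟩
    exact φ.congr (φ.mono hyA hC hCA) (AEEqOn.symm hxy)
  · intro hxC
    obtain ⟨y, hyA, hxy⟩ := hxC.exists_extension hX hzA
    exact ⟨φ.measurableSet hxC, hAmax x C hxC, y, ⟨y.2, hyA⟩, hxy⟩

theorem membership_cbot (hX : Stable P X) :
    membership (⟨cbot X, hX, subset_rfl, MeasurableSet.empty⟩ : CondSub P X) = ⊥ :=
  eq_bot_iff.2 fun _ _ hC => ⟨hC.1, ae_eq_empty.1 (hC.2.1.antisymm (empty_subset _).eventuallyLE)⟩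

theorem membership_ctop (hX : Stable P X) :
    membership (⟨ctop X, hX, subset_rfl, MeasurableSet.univ⟩ : CondSub P X) = ⊤ :=
  eq_top_iff.2 fun x C hC =>
    ⟨hC, (subset_univ C).eventuallyLE, x, x.2, AEEqOn.of_eqOn (eqOn_refl _ C)⟩

end CondSub

namespace CondPow

/-- The local predicate of an element of the conditional power set. -/
def membership : CondPow P X → LocalPred P X :=
  Quot.lift CondSub.membership fun _ _ h =>
    (CondSub.membership_le_iff.2 h.1).antisymm (CondSub.membership_le_iff.2 h.2)

theorem membership_le_iff {a b : CondPow P X} : a.membership ≤ b.membership ↔ qle P X a b := by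
  induction a using Quot.ind with | mk S
  induction b using Quot.ind with | mk T
  refine ⟨?_, fun h => CondSub.membership_le_iff.2 (h S T rfl rfl)⟩
  rintro h S' T' hS hT
  rw [← hS, ← hT] at h
  exact CondSub.membership_le_iff.1 h

theorem membership_injective : Function.Injective (membership : CondPow P X → LocalPred P X) := by
  rintro ⟨S⟩ ⟨T⟩ h
  exact Quot.sound ⟨CondSub.membership_le_iff.1 h.le, CondSub.membership_le_iff.1 h.ge⟩

theorem membership_bijective [SFinite P] (hX : Stable P X) :
    Function.Bijective (membership : CondPow P X → LocalPred P X) :=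
  ⟨membership_injective, fun φ =>
    have ⟨S, hS⟩ := CondSub.exists_membership_eq hX φ
    ⟨Quot.mk _ S, hS⟩⟩

end CondPow

end

theorem condPow_completeBooleanAlgebra_general
    {Ω E : Type*} {mΩ : MeasurableSpace Ω} (P : @Measure Ω mΩ)
    [SFinite P] (X : Set (Ω → E)) (hX : Stable P X) :
    ∃ inst : CompleteBooleanAlgebra (CondPow P X),
      (∀ a b : CondPow P X, inst.le a b ↔ qle P X a b) ∧
      inst.bot = Quot.mk _ (⟨cbot X, hX, subset_rfl, MeasurableSet.empty⟩ : CondSub P X) ∧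
      inst.top = Quot.mk _ (⟨ctop X, hX, subset_rfl, MeasurableSet.univ⟩ : CondSub P X) := by
  let e := Equiv.ofBijective CondPow.membership (CondPow.membership_bijective hX)
  refine ⟨e.completeBooleanAlgebra, fun a b => CondPow.membership_le_iff, ?_, ?_⟩
  · exact e.symm_apply_eq.2 (CondSub.membership_cbot hX).symm
  · exact e.symm_apply_eq.2 (CondSub.membership_ctop hX).symm

/-- **Theorem 2.9 / Corollary (DJKK13).**  For a stable set `X` of functions on `Ω`,
the conditional power set `P(X)`, ordered by conditional inclusion `⊑`, is a
complete, complemented, distributive lattice; equivalently, equipped with the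
conditional union, conditional intersection and conditional complement, with least
element `{∗} = X|∅` and greatest element `X = X|Ω`, it is a complete Boolean
algebra. -/
theorem condPow_completeBooleanAlgebra
    {Ω E : Type*} {mΩ : MeasurableSpace Ω} (P : @Measure Ω mΩ)
    [IsProbabilityMeasure P] (X : Set (Ω → E)) (hX : Stable P X) :
    ∃ inst : CompleteBooleanAlgebra (CondPow P X),
      (∀ a b : CondPow P X, inst.le a b ↔ qle P X a b) ∧
      inst.bot = Quot.mk _ (⟨cbot X, hX, subset_rfl, MeasurableSet.empty⟩ : CondSub P X) ∧
      inst.top = Quot.mk _ (⟨ctop X, hX, subset_rfl, MeasurableSet.univ⟩ : CondSub P X) :=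
  condPow_completeBooleanAlgebra_general P X hX

end CondMT
end
end

section
/- (Conditional π-λ theorem.) Let X be a stable set of functions on Ω and ℰ ⊆ P(X) a stable collection that is closed under finite conditional intersections. Then the stable σ-algebra generated by ℰ coincides with the stable Dynkin system generated by ℰ: Σ(ℰ) = 𝒟(ℰ). -/
/-!
Common framework for conditional set theory and conditional measure theory
in the sense of Drapeau–Jamneshan–Karliczek–Kupper, specialized to the
measure algebra associated to a probability space `(Ω, F, P)`.

Functions on `Ω` are identified when they agree `P`-a.s., and measurable sets
are identified when their symmetric difference is a null set.  Conditional
subsets of a stable set `X` are represented by raw pairs `(V, A)` consisting of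
a set of functions and a (measurable) base set; all notions are formulated with
respect to the almost-sure identifications via the relations `cle` and `ceq`.
-/

open MeasureTheory Filter Set Topology
open scoped ENNReal

noncomputable section

namespace CondMT

/-!
Up to null sets, a conditional subset `V|A` of `X` is the same as a subset `s` of `X × Ω`: its
section at `x ∈ X` is the largest event on which `x` belongs to `V|A`, i.e. the base set of the
stable indicator of `V|A` at `x`. The subsets of `X × Ω` arising in this way are those which have
measurable sections and are local: `(x, ω) ∈ s ↔ (y, ω) ∈ s` a.s. on every event on which `x = y`.
Under this correspondence conditional unions, intersections, complements and inclusions become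
the ordinary ones, and concatenation along a partition `(A_k)` becomes `⋃ k, s_k ∩ (X × A_k)`.

Hence a stable Dynkin system gives a Dynkin system on `X × Ω` that is closed under intersection with
the cylinders `X × A`, and a σ-algebra on `X × Ω` containing these cylinders gives a stable
σ-algebra. The conditional π-λ theorem is thus the classical one for the π-system of the sets
`s ∩ (X × A)` with `s` representing an element of `ℰ`.
-/

section Measure

variable {Ω : Type*} {mΩ : MeasurableSpace Ω} {P : @Measure Ω mΩ}

lemma ae_eq_of_forall_measurable_ae_le_iff {A B : Set Ω} (hA : NullMeasurableSet A P)
    (hB : NullMeasurableSet B P)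
    (h : ∀ C, MeasurableSet C → (C ≤ᵐ[P] A ↔ C ≤ᵐ[P] B)) : A =ᵐ[P] B := by
  obtain ⟨A', -, hA', hA'A⟩ := hA.exists_measurable_superset_ae_eq
  obtain ⟨B', -, hB', hB'B⟩ := hB.exists_measurable_superset_ae_eq
  have hAB : A ≤ᵐ[P] B := hA'A.symm.le.trans ((h A' hA').1 hA'A.le)
  have hBA : B ≤ᵐ[P] A := hB'B.symm.le.trans ((h B' hB').2 hB'B.le)
  exact hAB.antisymm hBA

-- By exhaustion for the finite measure `P.toFinite`, which has the same null sets as `P`.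
lemma exists_ae_largest [SFinite P] {𝒞 : Set (Set Ω)} (hne : 𝒞.Nonempty)
    (hmeas : ∀ C ∈ 𝒞, MeasurableSet C)
    (hU : ∀ C : ℕ → Set Ω, (∀ n, C n ∈ 𝒞) → ⋃ n, C n ∈ 𝒞) :
    ∃ C ∈ 𝒞, ∀ C' ∈ 𝒞, C' ≤ᵐ[P] C := by
  obtain ⟨u, -, hu, hmem⟩ :=
    exists_seq_tendsto_sSup (hne.image P.toFinite) (OrderTop.bddAbove _)
  choose C hC hCu using hmem
  refine ⟨⋃ n, C n, hU C hC, fun C' hC' => ?_⟩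
  let D : ℕ → Set Ω := fun n => if n = 0 then C' else ⋃ n, C n
  have hD : ∀ n, D n ∈ 𝒞 := fun n => by
    by_cases hn : n = 0
    · simpa [D, hn] using hC'
    · simpa [D, hn] using hU C hC
  have hCD : ⋃ n, C n ⊆ ⋃ n, D n := subset_iUnion D 1
  have hC'D : C' ⊆ ⋃ n, D n := subset_iUnion D 0
  have hsup : P.toFinite (⋃ n, D n) ≤ P.toFinite (⋃ n, C n) :=
    calc P.toFinite (⋃ n, D n) ≤ sSup (P.toFinite '' 𝒞) := le_sSup (mem_image_of_mem _ (hU D hD))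
      _ ≤ P.toFinite (⋃ n, C n) :=
        le_of_tendsto' hu fun n => (hCu n).symm.le.trans (measure_mono (subset_iUnion C n))
  have hCD_ae : (⋃ n, C n : Set Ω) =ᵐ[P.toFinite] ⋃ n, D n :=
    ae_eq_of_subset_of_measure_ge hCD hsup (hmeas _ (hU C hC)).nullMeasurableSet
      (measure_ne_top _ _)
  rw [← ae_toFinite (μ := P)]
  exact hC'D.eventuallyLE.trans hCD_ae.symm.le

lemma largestSet_spec {Φ : Set Ω → Prop}
    (h : ∃ C, MeasurableSet C ∧ Φ C ∧ ∀ C', MeasurableSet C' → Φ C' → P (C' \ C) = 0) :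
    Φ (largestSet P Φ) ∧ ∀ C, MeasurableSet C → Φ C → C ≤ᵐ[P] largestSet P Φ := by
  rw [largestSet, dif_pos h]
  exact ⟨h.choose_spec.2.1, fun C hC hΦ => ae_le_set.2 (h.choose_spec.2.2 C hC hΦ)⟩

lemma measurableSet_largestSet (P : @Measure Ω mΩ) (Φ : Set Ω → Prop) :
    MeasurableSet (largestSet P Φ) := by
  rw [largestSet]
  split_ifs with h
  · exact h.choose_spec.1
  · exact MeasurableSet.empty

end Measure

namespace Partition

variable {Ω E : Type*} {mΩ : MeasurableSpace Ω} {P : @Measure Ω mΩ}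

lemma ae_exists_mem_part (A : Partition mΩ P) : ∀ᵐ ω ∂P, ∃ k, ω ∈ A.part k := by
  filter_upwards [measure_eq_zero_iff_ae_notMem.1 A.cover] with ω hω
  simpa using hω

lemma ae_eq_of_mem_part (A : Partition mΩ P) :
    ∀ᵐ ω ∂P, ∀ i j, ω ∈ A.part i → ω ∈ A.part j → i = j := by
  simp_rw [ae_all_iff]
  intro i j
  by_cases hij : i = j
  · exact ae_of_all _ fun _ _ _ => hij
  · filter_upwards [measure_eq_zero_iff_ae_notMem.1 (A.disj i j hij)] with ω hω hi hj
    exact absurd ⟨hi, hj⟩ hω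

lemma concat_ae_eq (A : Partition mΩ P) (x : ℕ → Ω → E) :
    ∀ᵐ ω ∂P, ∀ k, ω ∈ A.part k → A.concat x ω = x k ω := by
  filter_upwards [A.ae_eq_of_mem_part] with ω hω k hk
  have hex : ∃ k, ω ∈ A.part k := ⟨k, hk⟩
  classical
  rw [concat, dif_pos hex, hω _ k (Nat.find_spec hex) hk]

lemma ae_le_iUnion_inter_iff (A : Partition mΩ P) {C : Set Ω} {B : ℕ → Set Ω} :
    C ≤ᵐ[P] ⋃ k, A.part k ∩ B k ↔ ∀ k, (C ∩ A.part k : Set Ω) ≤ᵐ[P] B k := by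
  constructor
  · intro h k
    filter_upwards [h, A.ae_eq_of_mem_part] with ω hω huniq hCk
    obtain ⟨j, hj, hBj⟩ := mem_iUnion.1 (hω hCk.1)
    rwa [huniq k j hCk.2 hj]
  · intro h
    filter_upwards [ae_all_iff.2 h, A.ae_exists_mem_part] with ω hω ⟨k, hk⟩ hC
    exact mem_iUnion.2 ⟨k, hk, hω k ⟨hC, hk⟩⟩

variable (P) in
/-- The partition into the successive differences of a countable measurable cover. -/
def ofCover (C : ℕ → Set Ω) (hC : ∀ k, MeasurableSet (C k)) (hU : ⋃ k, C k = univ) :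
    Partition mΩ P where
  part := disjointed C
  meas := .disjointed hC
  disj i j hij := by rw [(disjoint_disjointed C hij).inter_eq, measure_empty]
  cover := by rw [iUnion_disjointed, hU, compl_univ, measure_empty]

lemma ofCover_part_subset (C : ℕ → Set Ω) (hC : ∀ k, MeasurableSet (C k))
    (hU : ⋃ k, C k = univ) (k : ℕ) : (ofCover P C hC hU).part k ⊆ C k :=
  disjointed_subset C k

lemma exists_part_zero_eq {A : Set Ω} (hA : MeasurableSet A) :
    ∃ Q : Partition mΩ P, Q.part 0 = A := by
  let C : ℕ → Set Ω := fun k => if k = 0 then A else univ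
  have hC : ∀ k, MeasurableSet (C k) := fun k => by
    dsimp only [C]
    split_ifs
    exacts [hA, .univ]
  exact ⟨ofCover P C hC (univ_subset_iff.1 (subset_iUnion C 1)), disjointed_zero C⟩

end Partition

section Local

variable {Ω E : Type*} {mΩ : MeasurableSpace Ω} {P : @Measure Ω mΩ} {V : Set (Ω → E)}

lemma Stable.mem_of_ae_eq (hV : Stable P V) {x y : Ω → E} (hx : x ∈ V) (hxy : x =ᵐ[P] y) :
    y ∈ V :=
  hV.2.1 x hx y hxy

lemma Stable.concat_mem (hV : Stable P V) (A : Partition mΩ P) {x : ℕ → Ω → E}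
    (hx : ∀ k, x k ∈ V) : A.concat x ∈ V :=
  hV.2.2 A x hx

lemma Stable.exists_eq_on_and_compl (hV : Stable P V) {A : Set Ω} (hA : MeasurableSet A)
    {x y : Ω → E} (hx : x ∈ V) (hy : y ∈ V) :
    ∃ z ∈ V, (∀ᵐ ω ∂P, ω ∈ A → z ω = x ω) ∧ ∀ᵐ ω ∂P, ω ∈ Aᶜ → z ω = y ω := by
  obtain ⟨Q, rfl⟩ := Partition.exists_part_zero_eq (P := P) hA
  let u : ℕ → Ω → E := fun k => if k = 0 then x else y
  have hu : ∀ k, u k ∈ V := fun k => by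
    dsimp only [u]
    split_ifs
    exacts [hx, hy]
  refine ⟨Q.concat u, hV.concat_mem Q hu, ?_, ?_⟩
  · filter_upwards [Q.concat_ae_eq u] with ω hω h0 using hω 0 h0
  · filter_upwards [Q.concat_ae_eq u, Q.ae_exists_mem_part] with ω hω ⟨k, hk⟩ h0
    have hk0 : k ≠ 0 := by rintro rfl; exact h0 hk
    simpa [u, hk0] using hω k hk

/-- The section `{ω | (x, ω) ∈ s}`, as an event. -/
abbrev sectionAt {α : Type*} (s : Set (α × Ω)) (x : α) : Set Ω := Prod.mk x ⁻¹' s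

/-- A subset `s` of `V × Ω` is local if whether `(y, ω)` lies in `s` depends a.s. only on the
germ of `y` at `ω`: if `y = z` a.s. on a measurable set `D`, then the sections of `s` at `y` and
`z` agree a.s. on `D`. By symmetry in `y` and `z` one inclusion suffices. -/
def IsLocal (P : @Measure Ω mΩ) (s : Set (V × Ω)) : Prop :=
  ∀ (y z : V) (D : Set Ω), MeasurableSet D → (∀ᵐ ω ∂P, ω ∈ D → y.1 ω = z.1 ω) →
    ∀ᵐ ω ∂P, ω ∈ D → (y, ω) ∈ s → (z, ω) ∈ s

lemma IsLocal.ae_le_section {s : Set (V × Ω)} (hs : IsLocal P s) {y z : V} {C : Set Ω}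
    (hC : MeasurableSet C) (hyz : ∀ᵐ ω ∂P, ω ∈ C → y.1 ω = z.1 ω)
    (hy : C ≤ᵐ[P] sectionAt s y) : C ≤ᵐ[P] sectionAt s z := by
  filter_upwards [hs y z C hC hyz, hy] with ω hω hy hC using hω hC (hy hC)

lemma Stable.exists_iUnion_ae_le_section (hV : Stable P V) {s : Set (V × Ω)} (hs : IsLocal P s)
    {C : ℕ → Set Ω} (hC : ∀ k, MeasurableSet (C k)) {y : ℕ → V}
    (hy : ∀ k, C k ≤ᵐ[P] sectionAt s (y k)) : ∃ z : V, ⋃ k, C k ≤ᵐ[P] sectionAt s z := by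
  let A := Partition.ofCover P (fun k => C k ∪ (⋃ n, C n)ᶜ)
    (fun k => (hC k).union (MeasurableSet.iUnion hC).compl)
    (by rw [← iUnion_union, union_compl_self])
  let z : V := ⟨A.concat fun k => (y k).1, hV.concat_mem A fun k => (y k).2⟩
  have hyz : ∀ k, ∀ᵐ ω ∂P, ω ∈ A.part k → (y k, ω) ∈ s → (z, ω) ∈ s := fun k => by
    refine hs (y k) z (A.part k) (A.meas k) ?_
    filter_upwards [A.concat_ae_eq fun k => (y k).1] with ω hω hk using (hω k hk).symm
  refine ⟨z, ?_⟩
  filter_upwards [A.ae_exists_mem_part, ae_all_iff.2 hy, ae_all_iff.2 hyz]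
    with ω ⟨k, hk⟩ hyω hyzω hω
  have hCk : ω ∈ C k := (Partition.ofCover_part_subset _ _ _ k hk).resolve_right fun h => h hω
  exact hyzω k hk (hyω k hCk)

lemma Stable.exists_largest_section [SFinite P] (hV : Stable P V) {s : Set (V × Ω)}
    (hs : IsLocal P s) :
    ∃ C : Set Ω, MeasurableSet C ∧ (∃ y : V, C ≤ᵐ[P] sectionAt s y) ∧
      ∀ C' : Set Ω, MeasurableSet C' → (∃ y : V, C' ≤ᵐ[P] sectionAt s y) → C' ≤ᵐ[P] C := by
  let 𝒞 : Set (Set Ω) := {C | MeasurableSet C ∧ ∃ y : V, C ≤ᵐ[P] sectionAt s y}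
  have hne : 𝒞.Nonempty :=
    let ⟨y, hy⟩ := hV.1
    ⟨∅, .empty, ⟨y, hy⟩, (empty_subset _).eventuallyLE⟩
  have hU : ∀ C : ℕ → Set Ω, (∀ k, C k ∈ 𝒞) → ⋃ k, C k ∈ 𝒞 := fun C hC => by
    choose hCm y hy using hC
    exact ⟨.iUnion hCm, hV.exists_iUnion_ae_le_section hs hCm hy⟩
  obtain ⟨C, ⟨hC, hCs⟩, hmax⟩ := exists_ae_largest (P := P) hne (fun C hC => hC.1) hU
  exact ⟨C, hC, hCs, fun C' hC' hC's => hmax C' ⟨hC', hC's⟩⟩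

end Local

section IndBase

variable {Ω E : Type*} {mΩ : MeasurableSpace Ω} {P : @Measure Ω mΩ} {S T : CondRaw Ω E}

lemma memOn.mono {V : Set (Ω → E)} {x : Ω → E} {C D : Set Ω} (h : memOn P D x V)
    (hCD : C ≤ᵐ[P] D) : memOn P C x V := by
  obtain ⟨y, hy, hxy⟩ := h
  refine ⟨y, hy, ?_⟩
  filter_upwards [hxy, hCD] with ω hω hCD hC using hω (hCD hC)

lemma measurableSet_indBase (P : @Measure Ω mΩ) (S : CondRaw Ω E) (x : Ω → E) :
    MeasurableSet (indBase P S x) :=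
  measurableSet_largestSet P _

lemma Stable.ae_le_indBase_iff [SFinite P] (hS : Stable P S.1) {C : Set Ω}
    (hC : MeasurableSet C) {x : Ω → E} :
    C ≤ᵐ[P] indBase P S x ↔ C ≤ᵐ[P] S.2 ∧ memOn P C x S.1 := by
  let s : Set (S.1 × Ω) := {p | p.2 ∈ S.2 ∧ x p.2 = p.1.1 p.2}
  have hs : IsLocal P s := fun y z D _ hyz => by
    filter_upwards [hyz] with ω hω hD h using ⟨h.1, h.2.trans (hω hD)⟩
  have hmem : ∀ C : Set Ω, (∃ y : S.1, C ≤ᵐ[P] sectionAt s y) ↔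
      P (C \ S.2) = 0 ∧ memOn P C x S.1 := fun C => by
    rw [← ae_le_set]
    constructor
    · rintro ⟨y, hy⟩
      exact ⟨hy.mono fun ω h hC => (h hC).1, y, y.2, hy.mono fun ω h hC => (h hC).2⟩
    · rintro ⟨hCS, y, hy, hxy⟩
      exact ⟨⟨y, hy⟩, by filter_upwards [hCS, hxy] with ω h h' hC using ⟨h hC, h' hC⟩⟩
  obtain ⟨⟨hnull, hmemOn⟩, hmax⟩ := largestSet_spec
    (Φ := fun C => P (C \ S.2) = 0 ∧ memOn P C x S.1)
    (by simpa only [hmem, ← ae_le_set] using hS.exists_largest_section hs)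
  constructor
  · exact fun h => ⟨h.trans (ae_le_set.2 hnull), hmemOn.mono h⟩
  · exact fun h => hmax C hC ⟨ae_le_set.1 h.1, h.2⟩

lemma Stable.indBase_ae_le_base [SFinite P] (hS : Stable P S.1) (x : Ω → E) :
    indBase P S x ≤ᵐ[P] S.2 :=
  ((hS.ae_le_indBase_iff (measurableSet_indBase P S x)).1 (EventuallyLE.refl _ _)).1

lemma Stable.memOn_indBase [SFinite P] (hS : Stable P S.1) (x : Ω → E) :
    memOn P (indBase P S x) x S.1 :=
  ((hS.ae_le_indBase_iff (measurableSet_indBase P S x)).1 (EventuallyLE.refl _ _)).2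

lemma cle_iff_forall_indBase_ae_le [SFinite P] {X : Set (Ω → E)} (hS : IsCond P X S)
    (hT : Stable P T.1) : cle P S T ↔ ∀ x ∈ X, indBase P S x ≤ᵐ[P] indBase P T x := by
  have hbase : (∀ x ∈ S.1, S.2 ≤ᵐ[P] indBase P T x) → cle P S T := fun h => by
    obtain ⟨x₀, hx₀⟩ := hS.1.1
    have hle := fun x hx => (hT.ae_le_indBase_iff hS.2.2).1 (h x hx)
    exact ⟨ae_le_set.1 (hle x₀ hx₀).1, fun x hx => (hle x hx).2⟩
  constructor
  · rintro ⟨hST, hcle⟩ x -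
    obtain ⟨y, hy, hxy⟩ := hS.1.memOn_indBase x
    obtain ⟨z, hz, hyz⟩ := hcle y hy
    have hxS := hS.1.indBase_ae_le_base x
    refine (hT.ae_le_indBase_iff (measurableSet_indBase P S x)).2
      ⟨hxS.trans (ae_le_set.2 hST), z, hz, ?_⟩
    filter_upwards [hxy, hyz, hxS] with ω hxy hyz hxS hω using (hxy hω).trans (hyz (hxS hω))
  · refine fun h => hbase fun x hx => EventuallyLE.trans ?_ (h x (hS.2.1 hx))
    exact (hS.1.ae_le_indBase_iff hS.2.2).2
      ⟨EventuallyLE.refl _ _, x, hx, ae_of_all _ fun _ _ => rfl⟩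

end IndBase

section MemGraph

variable {Ω E : Type*} {mΩ : MeasurableSpace Ω} {P : @Measure Ω mΩ} {X : Set (Ω → E)}

variable (P X) in
/-- The σ-algebra on `X × Ω` of the local sets with measurable sections; these are the graphs of
the conditional subsets of `X`, see `IsMemGraph`. -/
abbrev memGraphSpace : MeasurableSpace (X × Ω) where
  MeasurableSet' s := IsLocal P s ∧ ∀ x, NullMeasurableSet (sectionAt s x) P
  measurableSet_empty :=
    ⟨fun _ _ _ _ _ => ae_of_all _ fun _ _ h => h, fun _ => nullMeasurableSet_empty⟩
  measurableSet_compl s := by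
    rintro ⟨hs, hm⟩
    refine ⟨fun y z D hD hyz => ?_, fun x => (hm x).compl⟩
    have hzy : ∀ᵐ ω ∂P, ω ∈ D → z.1 ω = y.1 ω := hyz.mono fun ω h hω => (h hω).symm
    filter_upwards [hs z y D hD hzy] with ω hω hωD hy hz using hy (hω hωD hz)
  measurableSet_iUnion s hs := by
    refine ⟨fun y z D hD hyz => ?_, fun x => ?_⟩
    · filter_upwards [ae_all_iff.2 fun k => (hs k).1 y z D hD hyz] with ω hω hωD hy
      obtain ⟨k, hk⟩ := mem_iUnion.1 hy
      exact mem_iUnion.2 ⟨k, hω k hωD hk⟩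
    · rw [sectionAt, preimage_iUnion]
      exact .iUnion fun k => (hs k).2 x

variable (P) in
/-- `s ⊆ X × Ω` is a graph of the conditional subset `S` of `X` if its section at every `x` is a.s.
the largest event on which `x` belongs to `S`, so that the indicator function of `s` is the stable
indicator function of `S`. -/
structure IsMemGraph (S : CondRaw Ω E) (s : Set (X × Ω)) : Prop where
  isCond : IsCond P X S
  indBase_ae_eq : ∀ x : X, indBase P S x =ᵐ[P] sectionAt s x

variable {S T : CondRaw Ω E} {s t : Set (X × Ω)}

lemma IsCond.isMemGraph (hS : IsCond P X S) :
    IsMemGraph P S {p : X × Ω | p.2 ∈ indBase P S p.1} :=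
  ⟨hS, fun _ => EventuallyEq.refl _ _⟩

namespace IsMemGraph

lemma ae_le_section_iff [SFinite P] (hs : IsMemGraph P S s) {C : Set Ω} (hC : MeasurableSet C)
    (x : X) : C ≤ᵐ[P] sectionAt s x ↔ C ≤ᵐ[P] S.2 ∧ memOn P C x S.1 := by
  rw [← hs.isCond.1.ae_le_indBase_iff hC]
  exact ⟨fun h => h.trans (hs.indBase_ae_eq x).symm.le, fun h => h.trans (hs.indBase_ae_eq x).le⟩

lemma cle_iff [SFinite P] (hs : IsMemGraph P S s) (ht : IsMemGraph P T t) :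
    cle P S T ↔ ∀ x, sectionAt s x ≤ᵐ[P] sectionAt t x := by
  rw [cle_iff_forall_indBase_ae_le hs.isCond ht.isCond.1, ← Subtype.forall (p := (· ∈ X))
    (q := fun x => indBase P S x ≤ᵐ[P] indBase P T x)]
  refine forall_congr' fun x => ⟨fun h => ?_, fun h => ?_⟩
  · exact (hs.indBase_ae_eq x).symm.le.trans (h.trans (ht.indBase_ae_eq x).le)
  · exact (hs.indBase_ae_eq x).le.trans (h.trans (ht.indBase_ae_eq x).symm.le)

lemma ceq_iff [SFinite P] (hs : IsMemGraph P S s) (ht : IsMemGraph P T t) :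
    ceq P S T ↔ ∀ x, sectionAt s x =ᵐ[P] sectionAt t x := by
  rw [ceq, hs.cle_iff ht, ht.cle_iff hs, ← forall_and]
  exact forall_congr' fun x => ⟨fun h => h.1.antisymm h.2, fun h => ⟨h.le, h.symm.le⟩⟩

lemma ceq [SFinite P] (hS : IsMemGraph P S s) (hT : IsMemGraph P T s) : ceq P S T :=
  (hS.ceq_iff hT).2 fun _ => EventuallyEq.refl _ _

lemma of_ceq [SFinite P] (hs : IsMemGraph P S s) (hT : IsCond P X T) (h : CondMT.ceq P S T) :
    IsMemGraph P T s :=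
  ⟨hT, fun x => ((hs.ceq_iff hT.isMemGraph).1 h x).symm⟩

lemma measurableSet [SFinite P] (hs : IsMemGraph P S s) : MeasurableSet[memGraphSpace P X] s := by
  refine ⟨fun y z D hD hyz => ?_, fun x => ?_⟩
  · have hDy := hD.inter (measurableSet_indBase P S y)
    have hy : (D ∩ indBase P S y : Set Ω) ≤ᵐ[P] sectionAt s y :=
      inter_subset_right.eventuallyLE.trans (hs.indBase_ae_eq y).le
    obtain ⟨hbase, u, hu, hyu⟩ := (hs.ae_le_section_iff hDy y).1 hy
    have hz : (D ∩ indBase P S y : Set Ω) ≤ᵐ[P] sectionAt s z := by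
      refine (hs.ae_le_section_iff hDy z).2 ⟨hbase, u, hu, ?_⟩
      filter_upwards [hyz, hyu] with ω hyz hyu hω using (hyz hω.1).symm.trans (hyu hω)
    filter_upwards [hz, (hs.indBase_ae_eq y).symm.le] with ω hω hsy hωD hωs
    exact hω ⟨hωD, hsy hωs⟩
  · exact (measurableSet_indBase P S x).nullMeasurableSet.congr (hs.indBase_ae_eq x)

end IsMemGraph

lemma Stable.stable_setOf_ae_le_section (hX : Stable P X) (hs : IsLocal P s) {C : Set Ω}
    (hC : MeasurableSet C) (hne : ∃ x, C ≤ᵐ[P] sectionAt s x) :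
    Stable P (Subtype.val '' {x : X | C ≤ᵐ[P] sectionAt s x}) := by
  refine ⟨Set.Nonempty.image _ hne, ?_, fun A u hu => ?_⟩
  · rintro _ ⟨x, hx, rfl⟩ y hxy
    refine ⟨⟨y, hX.mem_of_ae_eq x.2 hxy⟩, ?_, rfl⟩
    exact hs.ae_le_section hC (hxy.mono fun ω h _ => h) hx
  · choose x hx hxu using hu
    obtain rfl : (fun k => (x k).1) = u := funext hxu
    refine ⟨⟨_, hX.concat_mem A fun k => (x k).2⟩, ?_, rfl⟩
    have hx_concat := fun k => hs (x k) ⟨_, hX.concat_mem A fun k => (x k).2⟩ (A.part k)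
      (A.meas k) ((A.concat_ae_eq fun k => (x k).1).mono fun ω h hk => (h k hk).symm)
    filter_upwards [A.ae_exists_mem_part, ae_all_iff.2 hx, ae_all_iff.2 hx_concat]
      with ω ⟨k, hk⟩ hxω h hω using h k hk (hxω k hω)

lemma Stable.exists_isMemGraph [SFinite P] (hX : Stable P X)
    (hs : MeasurableSet[memGraphSpace P X] s) : ∃ S, IsMemGraph P S s := by
  obtain ⟨hloc, hm⟩ := hs
  obtain ⟨C₀, hC₀, ⟨x₀, hx₀⟩, hmax⟩ := hX.exists_largest_section hloc
  have hV := hX.stable_setOf_ae_le_section hloc hC₀ ⟨x₀, hx₀⟩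
  refine ⟨(Subtype.val '' {x : X | C₀ ≤ᵐ[P] sectionAt s x}, C₀),
    ⟨hV, Subtype.coe_image_subset _ _, hC₀⟩, fun x => ?_⟩
  refine ae_eq_of_forall_measurable_ae_le_iff (measurableSet_indBase P _ _).nullMeasurableSet
    (hm x) fun C hC => ?_
  rw [Stable.ae_le_indBase_iff hV hC]
  constructor
  · rintro ⟨hCC₀, _, ⟨y, hy, rfl⟩, hxy⟩
    exact hloc.ae_le_section hC (hxy.mono fun ω h hω => (h hω).symm) (hCC₀.trans hy)
  · intro hx
    obtain ⟨y, hyX, hyx, hyx₀⟩ := hX.exists_eq_on_and_compl hC x.2 x₀.2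
    refine ⟨hmax C hC ⟨x, hx⟩, y, ⟨⟨y, hyX⟩, ?_, rfl⟩, hyx.mono fun ω h hω => (h hω).symm⟩
    have hy := hloc x ⟨y, hyX⟩ C hC (hyx.mono fun ω h hω => (h hω).symm)
    have hy₀ := hloc x₀ ⟨y, hyX⟩ Cᶜ hC.compl (hyx₀.mono fun ω h hω => (h hω).symm)
    filter_upwards [hx, hx₀, hy, hy₀] with ω hx hx₀ hy hy₀ hω
    by_cases hωC : ω ∈ C
    · exact hy hωC (hx hωC)
    · exact hy₀ hωC (hx₀ hω)

end MemGraph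

section Operations

variable {Ω E : Type*} {mΩ : MeasurableSpace Ω} {P : @Measure Ω mΩ} {X : Set (Ω → E)}
  {S T : CondRaw Ω E} {s t : Set (X × Ω)}

lemma isSupOf_cSup {𝒮 : Set (CondRaw Ω E)} (h : IsSupOf P X 𝒮 S) :
    IsSupOf P X 𝒮 (cSup P X 𝒮) := by
  have hex : ∃ a, IsSupOf P X 𝒮 a := ⟨S, h⟩
  rw [cSup, dif_pos hex]
  exact hex.choose_spec

lemma isInfOf_cInf {𝒮 : Set (CondRaw Ω E)} (h : IsInfOf P X 𝒮 S) :
    IsInfOf P X 𝒮 (cInf P X 𝒮) := by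
  have hex : ∃ a, IsInfOf P X 𝒮 a := ⟨S, h⟩
  rw [cInf, dif_pos hex]
  exact hex.choose_spec

lemma isCond_cbot (hX : Stable P X) : IsCond P X (cbot X) := ⟨hX, Subset.rfl, .empty⟩

lemma isCond_ctop (hX : Stable P X) : IsCond P X (ctop X) := ⟨hX, Subset.rfl, .univ⟩

namespace IsMemGraph

variable [SFinite P]

lemma cSup {𝒮 : Set (CondRaw Ω E)} (hs : IsMemGraph P S s) (h : IsSupOf P X 𝒮 S) :
    IsMemGraph P (cSup P X 𝒮) s := by
  obtain ⟨hcond, hub, hle⟩ := isSupOf_cSup h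
  exact hs.of_ceq hcond ⟨h.2.2 _ hcond hub, hle S h.1 h.2.1⟩

lemma cInf {𝒮 : Set (CondRaw Ω E)} (hs : IsMemGraph P S s) (h : IsInfOf P X 𝒮 S) :
    IsMemGraph P (cInf P X 𝒮) s := by
  obtain ⟨hcond, hlb, hle⟩ := isInfOf_cInf h
  exact hs.of_ceq hcond ⟨hle S h.1 h.2.1, h.2.2 _ hcond hlb⟩

lemma cInf₂ (hX : Stable P X) (hs : IsMemGraph P S s) (ht : IsMemGraph P T t) :
    IsMemGraph P (cInf₂ P X S T) (s ∩ t) := by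
  obtain ⟨R, hR⟩ := hX.exists_isMemGraph (hs.measurableSet.inter ht.measurableSet)
  refine hR.cInf ⟨hR.isCond, ?_, fun U hU hUST => (hU.isMemGraph.cle_iff hR).2 fun x => ?_⟩
  · rintro _ (rfl | rfl)
    · exact (hR.cle_iff hs).2 fun x => (preimage_mono inter_subset_left).eventuallyLE
    · exact (hR.cle_iff ht).2 fun x => (preimage_mono inter_subset_right).eventuallyLE
  · filter_upwards [(hU.isMemGraph.cle_iff hs).1 (hUST S (.inl rfl)) x,
      (hU.isMemGraph.cle_iff ht).1 (hUST T (.inr rfl)) x] with ω hs ht hω using ⟨hs hω, ht hω⟩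

lemma cSupFam {ι : Sort*} [Countable ι] (hX : Stable P X) {S : ι → CondRaw Ω E}
    {s : ι → Set (X × Ω)} (hs : ∀ k, IsMemGraph P (S k) (s k)) :
    IsMemGraph P (cSupFam P X S) (⋃ k, s k) := by
  obtain ⟨R, hR⟩ := hX.exists_isMemGraph (.iUnion fun k => (hs k).measurableSet)
  refine hR.cSup ⟨hR.isCond, ?_, fun U hU hSU => (hR.cle_iff hU.isMemGraph).2 fun x => ?_⟩
  · rintro _ ⟨k, rfl⟩
    exact ((hs k).cle_iff hR).2 fun x => (preimage_mono (subset_iUnion s k)).eventuallyLE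
  · have hle := fun k => ((hs k).cle_iff hU.isMemGraph).1 (hSU (S k) (mem_range_self k)) x
    filter_upwards [ae_all_iff.2 hle] with ω hω hsω
    obtain ⟨k, hk⟩ := mem_iUnion.1 hsω
    exact hω k hk

lemma cbot (hX : Stable P X) : IsMemGraph P (cbot X) (∅ : Set (X × Ω)) :=
  ⟨isCond_cbot hX, fun x =>
    (hX.indBase_ae_le_base (S := CondMT.cbot X) x).antisymm (empty_subset _).eventuallyLE⟩

lemma ctop (hX : Stable P X) : IsMemGraph P (ctop X) (univ : Set (X × Ω)) := by
  refine ⟨isCond_ctop hX, fun x => EventuallyLE.antisymm (subset_univ _).eventuallyLE ?_⟩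
  exact (Stable.ae_le_indBase_iff (S := CondMT.ctop X) hX .univ).2
    ⟨EventuallyLE.refl _ _, x, x.2, ae_of_all _ fun _ _ => rfl⟩

lemma cdisjoint_iff (hX : Stable P X) (hs : IsMemGraph P S s) (ht : IsMemGraph P T t) :
    cdisjoint P X S T ↔ ∀ x, AEDisjoint P (sectionAt s x) (sectionAt t x) := by
  rw [cdisjoint, (hs.cInf₂ hX ht).ceq_iff (cbot hX)]
  exact forall_congr' fun x => ae_eq_empty

lemma ccompl (hX : Stable P X) (hs : IsMemGraph P S s) : IsMemGraph P (ccompl P X S) sᶜ := by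
  obtain ⟨R, hR⟩ := hX.exists_isMemGraph hs.measurableSet.compl
  have hRS : cdisjoint P X R S :=
    (hR.cdisjoint_iff hX hs).2 fun x => (disjoint_compl_left.preimage _).aedisjoint
  refine hR.cSup ⟨hR.isCond, ?_, fun U _ hU => hU R ⟨hR.isCond, hRS⟩⟩
  rintro T ⟨hT, hTS⟩
  refine (hT.isMemGraph.cle_iff hR).2 fun x => ?_
  filter_upwards [measure_eq_zero_iff_ae_notMem.1 ((hT.isMemGraph.cdisjoint_iff hX hs).1 hTS x)]
    with ω hω hTω hsω using hω ⟨hTω, hsω⟩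

end IsMemGraph

end Operations

section Concatenation

variable {Ω E : Type*} {mΩ : MeasurableSpace Ω} {P : @Measure Ω mΩ} {X : Set (Ω → E)}

lemma stable_concatSet (A : Partition mΩ P) {V : ℕ → Set (Ω → E)} (hV : ∀ k, Stable P (V k)) :
    Stable P (concatSet P A V) := by
  refine ⟨?_, ?_, fun B f hf => ?_⟩
  · choose x hx using fun k => (hV k).1
    exact ⟨A.concat x, x, hx, EventuallyEq.refl _ _⟩
  · rintro f ⟨x, hx, hf⟩ g hfg
    exact ⟨x, hx, hfg.symm.trans hf⟩
  · choose x hx hfx using hf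
    refine ⟨fun k => B.concat fun j => x j k, fun k => (hV k).concat_mem B fun j => hx j k, ?_⟩
    filter_upwards [B.concat_ae_eq f, ae_all_iff.2 hfx, ae_all_iff.2 fun j => A.concat_ae_eq (x j),
      ae_all_iff.2 fun k => B.concat_ae_eq fun j => x j k,
      A.concat_ae_eq fun k => B.concat fun j => x j k, A.ae_exists_mem_part,
      B.ae_exists_mem_part] with ω hBf hfx hAx hBx hAB ⟨k, hk⟩ ⟨j, hj⟩
    rw [hBf j hj, hfx j, hAx j k hk, hAB k hk, hBx k j hj]

lemma isCond_condConcat (hX : Stable P X) (A : Partition mΩ P) {S : ℕ → CondRaw Ω E}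
    (hS : ∀ k, IsCond P X (S k)) : IsCond P X (condConcat P A S) := by
  refine ⟨stable_concatSet A fun k => (hS k).1, ?_,
    .iUnion fun k => (A.meas k).inter (hS k).2.2⟩
  rintro f ⟨x, hx, hf⟩
  exact hX.mem_of_ae_eq (hX.concat_mem A fun k => (hS k).2.1 (hx k)) hf.symm

lemma memOn_concatSet_iff (A : Partition mΩ P) {V : ℕ → Set (Ω → E)} {C : Set Ω} {x : Ω → E} :
    memOn P C x (concatSet P A V) ↔ ∀ k, memOn P (C ∩ A.part k) x (V k) := by
  constructor
  · rintro ⟨f, ⟨y, hy, hf⟩, hxf⟩ k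
    refine ⟨y k, hy k, ?_⟩
    filter_upwards [hxf, hf, A.concat_ae_eq y] with ω hxf hf hA hω
    rw [hxf hω.1, hf, hA k hω.2]
  · intro h
    choose y hy hxy using h
    refine ⟨A.concat y, ⟨y, hy, EventuallyEq.refl _ _⟩, ?_⟩
    filter_upwards [ae_all_iff.2 hxy, A.concat_ae_eq y, A.ae_exists_mem_part]
      with ω hxy hA ⟨k, hk⟩ hω
    rw [hA k hk, hxy k ⟨hω, hk⟩]

lemma IsMemGraph.condConcat [SFinite P] (hX : Stable P X) (A : Partition mΩ P)
    {S : ℕ → CondRaw Ω E} {s : ℕ → Set (X × Ω)} (hs : ∀ k, IsMemGraph P (S k) (s k)) :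
    IsMemGraph P (condConcat P A S) (⋃ k, Prod.snd ⁻¹' A.part k ∩ s k) := by
  have hcond := isCond_condConcat hX A fun k => (hs k).isCond
  have hsec : ∀ x, sectionAt (⋃ k, Prod.snd ⁻¹' A.part k ∩ s k) x =
      ⋃ k, A.part k ∩ sectionAt (s k) x := fun x => preimage_iUnion
  refine ⟨hcond, fun x => ?_⟩
  have hm : NullMeasurableSet (⋃ k, A.part k ∩ sectionAt (s k) x) P :=
    .iUnion fun k => (A.meas k).nullMeasurableSet.inter ((hs k).measurableSet.2 x)
  rw [hsec]
  refine ae_eq_of_forall_measurable_ae_le_iff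
    (measurableSet_indBase P _ _).nullMeasurableSet hm fun C hC => ?_
  calc C ≤ᵐ[P] indBase P (CondMT.condConcat P A S) x
      ↔ C ≤ᵐ[P] ⋃ k, A.part k ∩ (S k).2 ∧ memOn P C x (concatSet P A fun k => (S k).1) :=
        hcond.1.ae_le_indBase_iff hC
    _ ↔ ∀ k, (C ∩ A.part k : Set Ω) ≤ᵐ[P] (S k).2 ∧ memOn P (C ∩ A.part k) x (S k).1 := by
        rw [A.ae_le_iUnion_inter_iff, memOn_concatSet_iff, forall_and]
    _ ↔ ∀ k, (C ∩ A.part k : Set Ω) ≤ᵐ[P] sectionAt (s k) x :=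
        forall_congr' fun k => ((hs k).ae_le_section_iff (hC.inter (A.meas k)) x).symm
    _ ↔ C ≤ᵐ[P] ⋃ k, A.part k ∩ sectionAt (s k) x := A.ae_le_iUnion_inter_iff.symm

end Concatenation

section PiLambda

variable {Ω E : Type*} {mΩ : MeasurableSpace Ω} {P : @Measure Ω mΩ} {X : Set (Ω → E)}
  {𝒞 𝒟 ℰ 𝒳 : Set (CondRaw Ω E)} {S : CondRaw Ω E} {s : Set (X × Ω)}

variable (P X) in
/-- The graphs in `X × Ω` of the members of a family of conditional subsets. -/
def memGraphs (𝒞 : Set (CondRaw Ω E)) : Set (Set (X × Ω)) := {s | ∃ S ∈ 𝒞, IsMemGraph P S s}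

lemma IsStableColl.mem_of_mem_memGraphs [SFinite P] (h𝒞 : IsStableColl P X 𝒞)
    (hs : s ∈ memGraphs P X 𝒞) (hS : IsMemGraph P S s) : S ∈ 𝒞 := by
  obtain ⟨T, hT, hTs⟩ := hs
  exact h𝒞.2.2.1 T hT S hS.isCond (hTs.ceq hS)

namespace IsStableDynkin

lemma ctop_mem (h𝒟 : IsStableDynkin P X 𝒟) : ctop X ∈ 𝒟 := h𝒟.2.1

lemma ccompl_mem (h𝒟 : IsStableDynkin P X 𝒟) (hS : S ∈ 𝒟) : ccompl P X S ∈ 𝒟 := h𝒟.2.2.1 S hS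

lemma cSupFam_mem (h𝒟 : IsStableDynkin P X 𝒟) {S : ℕ → CondRaw Ω E} (hS : ∀ k, S k ∈ 𝒟)
    (hdisj : Pairwise fun i j => cdisjoint P X (S i) (S j)) : cSupFam P X S ∈ 𝒟 :=
  h𝒟.2.2.2 S hS fun _ _ hij => hdisj hij

lemma condConcat_mem (h𝒟 : IsStableDynkin P X 𝒟) (A : Partition mΩ P) {S : ℕ → CondRaw Ω E}
    (hS : ∀ k, S k ∈ 𝒟) : condConcat P A S ∈ 𝒟 :=
  h𝒟.1.2.2.2 A S hS

lemma empty_mem_memGraphs [SFinite P] (hX : Stable P X) (h𝒟 : IsStableDynkin P X 𝒟) :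
    ∅ ∈ memGraphs P X 𝒟 :=
  ⟨_, h𝒟.ccompl_mem h𝒟.ctop_mem, by simpa only [compl_univ] using (IsMemGraph.ctop hX).ccompl hX⟩

/-- The classical Dynkin system on `X × Ω` given by the graphs of a stable Dynkin system. -/
def dynkinSystem [SFinite P] (hX : Stable P X) (h𝒟 : IsStableDynkin P X 𝒟) :
    MeasurableSpace.DynkinSystem (X × Ω) where
  Has s := s ∈ memGraphs P X 𝒟
  has_empty := h𝒟.empty_mem_memGraphs hX
  has_compl := fun ⟨_, hS, hs⟩ => ⟨_, h𝒟.ccompl_mem hS, hs.ccompl hX⟩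
  has_iUnion_nat hdisj hs := by
    choose S hS hs using hs
    refine ⟨_, h𝒟.cSupFam_mem hS fun i j hij => ?_, IsMemGraph.cSupFam hX hs⟩
    exact ((hs i).cdisjoint_iff hX (hs j)).2 fun x => ((hdisj hij).preimage _).aedisjoint

lemma inter_cylinder_mem_memGraphs [SFinite P] (hX : Stable P X) (h𝒟 : IsStableDynkin P X 𝒟)
    (hs : s ∈ memGraphs P X 𝒟) {A : Set Ω} (hA : MeasurableSet A) :
    s ∩ Prod.snd ⁻¹' A ∈ memGraphs P X 𝒟 := by
  obtain ⟨Q, rfl⟩ := Partition.exists_part_zero_eq (P := P) hA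
  let t : ℕ → Set (X × Ω) := fun k => if k = 0 then s else ∅
  have ht : ∀ k, t k ∈ memGraphs P X 𝒟 := fun k => by
    dsimp only [t]
    split_ifs
    exacts [hs, h𝒟.empty_mem_memGraphs hX]
  have hunion : ⋃ k, Prod.snd ⁻¹' Q.part k ∩ t k = s ∩ Prod.snd ⁻¹' Q.part 0 := by
    ext p
    simp [t, and_comm]
  choose T hT hTt using ht
  exact ⟨_, h𝒟.condConcat_mem Q hT, hunion ▸ IsMemGraph.condConcat hX Q hTt⟩

end IsStableDynkin

variable (P X) in
/-- The generating π-system of the classical π-λ theorem on `X × Ω`: the cylinders `X × A`, and the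
sets `s ∩ (X × A)` with `s` a graph of an element of `ℰ`. -/
def graphGenerator (ℰ : Set (CondRaw Ω E)) : Set (Set (X × Ω)) :=
  image2 (fun s A => s ∩ Prod.snd ⁻¹' A) (insert univ (memGraphs P X ℰ)) {A | MeasurableSet A}

lemma isPiSystem_graphGenerator [SFinite P] (hX : Stable P X)
    (hπ : ∀ S ∈ ℰ, ∀ T ∈ ℰ, cInf₂ P X S T ∈ ℰ) : IsPiSystem (graphGenerator P X ℰ) := by
  have hgraphs : IsPiSystem (memGraphs P X ℰ) := by
    rintro s ⟨S, hS, hs⟩ t ⟨T, hT, ht⟩ -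
    exact ⟨_, hπ S hS T hT, hs.cInf₂ hX ht⟩
  rintro _ ⟨s, hs, A, hA, rfl⟩ _ ⟨t, ht, B, hB, rfl⟩ hne
  rw [inter_inter_inter_comm, ← preimage_inter] at hne ⊢
  exact mem_image2_of_mem (hgraphs.insert_univ s hs t ht hne.left) (MeasurableSet.inter hA hB)

lemma cylinder_mem_graphGenerator {A : Set Ω} (hA : MeasurableSet A) :
    Prod.snd ⁻¹' A ∈ graphGenerator P X ℰ :=
  ⟨univ, mem_insert _ _, A, hA, univ_inter _⟩

lemma mem_graphGenerator_of_mem_memGraphs (hs : s ∈ memGraphs P X ℰ) :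
    s ∈ graphGenerator P X ℰ :=
  ⟨s, mem_insert_of_mem _ hs, univ, MeasurableSet.univ, inter_univ s⟩

lemma IsStableDynkin.graphGenerator_subset_memGraphs [SFinite P] (hX : Stable P X)
    (h𝒟 : IsStableDynkin P X 𝒟) (hℰ𝒟 : ℰ ⊆ 𝒟) : graphGenerator P X ℰ ⊆ memGraphs P X 𝒟 := by
  rintro _ ⟨s, rfl | ⟨S, hS, hs⟩, A, hA, rfl⟩
  · exact h𝒟.inter_cylinder_mem_memGraphs hX ⟨_, h𝒟.ctop_mem, .ctop hX⟩ hA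
  · exact h𝒟.inter_cylinder_mem_memGraphs hX ⟨S, hℰ𝒟 hS, hs⟩ hA

lemma IsStableDynkin.mem_memGraphs_of_measurableSet [SFinite P] (hX : Stable P X)
    (h𝒟 : IsStableDynkin P X 𝒟) (hπ : ∀ S ∈ ℰ, ∀ T ∈ ℰ, cInf₂ P X S T ∈ ℰ) (hℰ𝒟 : ℰ ⊆ 𝒟)
    (hs : MeasurableSet[.generateFrom (graphGenerator P X ℰ)] s) : s ∈ memGraphs P X 𝒟 := by
  rw [MeasurableSpace.DynkinSystem.generateFrom_eq (isPiSystem_graphGenerator hX hπ)] at hs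
  exact MeasurableSpace.DynkinSystem.generate_le (h𝒟.dynkinSystem hX)
    (h𝒟.graphGenerator_subset_memGraphs hX hℰ𝒟) s hs

lemma isStableSigma_setOf_measurable_graph [SFinite P] (hX : Stable P X)
    {m : MeasurableSpace (X × Ω)}
    (hm : ∀ A : Set Ω, MeasurableSet A → MeasurableSet[m] (Prod.snd ⁻¹' A)) :
    IsStableSigma P X {S | ∃ s : Set (X × Ω), MeasurableSet[m] s ∧ IsMemGraph P S s} := by
  have hctop : IsMemGraph P (ctop X) (univ : Set (X × Ω)) := .ctop hX
  refine ⟨⟨⟨_, _, .univ, hctop⟩, ?_, ?_, ?_⟩, ⟨_, .univ, hctop⟩, ?_, ?_⟩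
  · rintro S ⟨s, -, hs⟩
    exact hs.isCond
  · rintro S ⟨s, hsm, hs⟩ T hT hST
    exact ⟨s, hsm, hs.of_ceq hT hST⟩
  · intro A S hS
    choose s hsm hs using hS
    exact ⟨_, .iUnion fun k => (hm _ (A.meas k)).inter (hsm k), .condConcat hX A hs⟩
  · rintro S ⟨s, hsm, hs⟩
    exact ⟨_, hsm.compl, hs.ccompl hX⟩
  · intro S hS
    choose s hsm hs using hS
    exact ⟨_, .iUnion hsm, .cSupFam hX hs⟩

lemma IsStableSigma.isStableDynkin (h𝒳 : IsStableSigma P X 𝒳) : IsStableDynkin P X 𝒳 :=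
  ⟨h𝒳.1, h𝒳.2.1, h𝒳.2.2.1, fun S hS _ => h𝒳.2.2.2 S hS⟩

theorem sigmaGen_eq_dynkinGen_general [SFinite P] (hX : Stable P X) (hℰ : ∀ S ∈ ℰ, IsCond P X S)
    (hπ : ∀ S ∈ ℰ, ∀ T ∈ ℰ, cInf₂ P X S T ∈ ℰ) : sigmaGen P X ℰ = dynkinGen P X ℰ := by
  apply Subset.antisymm
  · rintro S hS 𝒟 ⟨h𝒟, hℰ𝒟⟩
    let m := MeasurableSpace.generateFrom (graphGenerator P X ℰ)
    have hσ : IsStableSigma P X {S | ∃ s : Set (X × Ω), MeasurableSet[m] s ∧ IsMemGraph P S s} :=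
      isStableSigma_setOf_measurable_graph hX fun A hA =>
        MeasurableSpace.measurableSet_generateFrom (cylinder_mem_graphGenerator hA)
    have hgraph : ∀ T ∈ ℰ, ∃ t : Set (X × Ω), MeasurableSet[m] t ∧ IsMemGraph P T t := fun T hT =>
      have ht := (hℰ T hT).isMemGraph
      ⟨_, MeasurableSpace.measurableSet_generateFrom
        (mem_graphGenerator_of_mem_memGraphs ⟨T, hT, ht⟩), ht⟩
    obtain ⟨s, hsm, hs⟩ := hS _ ⟨hσ, hgraph⟩
    exact h𝒟.1.mem_of_mem_memGraphs (h𝒟.mem_memGraphs_of_measurableSet hX hπ hℰ𝒟 hsm) hs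
  · exact sInter_subset_sInter fun 𝒳 h𝒳 => ⟨h𝒳.1.isStableDynkin, h𝒳.2⟩

end PiLambda

/-- **Theorem 3.5 (conditional π-λ theorem).**  If `ℰ` is a stable collection in the
conditional power set of a stable set `X` which is closed under finite conditional
intersections, then the stable σ-algebra generated by `ℰ` coincides with the stable
Dynkin system generated by `ℰ`. -/
theorem sigmaGen_eq_dynkinGen
    {Ω E : Type*} {mΩ : MeasurableSpace Ω} (P : @Measure Ω mΩ)
    [IsProbabilityMeasure P] (X : Set (Ω → E)) (hX : Stable P X)
    (ℰ : Set (CondRaw Ω E)) (hℰ : IsStableColl P X ℰ)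
    (hπ : ∀ S ∈ ℰ, ∀ T ∈ ℰ, cInf₂ P X S T ∈ ℰ) :
    sigmaGen P X ℰ = dynkinGen P X ℰ :=
  sigmaGen_eq_dynkinGen_general hX hℰ.2.1 hπ

end CondMT
end
end
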